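/- arXiv:1610.05740 — 3 statements merged into one kernel-verified Lean document; each statement's English description precedes it below -/
import Mathlib

section
/- A function F : ℝ → ℝ maps M([−1,1]) into itself when applied entrywise (that is, for every admissible measure μ supported in [−1,1] there exists an admissible measure σ supported in [−1,1] with F(s_k(μ)) = s_k(σ) for all k ≥ 0) if and only if F is the restriction to ℝ of an absolutely monotonic entire function. -/
open MeasureTheory Filter Set
open scoped ENNReal

/-- An admissible measure: a non-negative Borel measure on `ℝ` all of whose absolute
moments are finite. -/
def IsAdmissible (μ : Measure ℝ) : Prop := ∀ k : ℕ, Integrable (fun x => x ^ k) μ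

/-- The `k`-th power moment of a measure. -/
noncomputable def moment (μ : Measure ℝ) (k : ℕ) : ℝ := ∫ x, x ^ k ∂μ

/-- `momentSet K` is the set of moment sequences of admissible measures supported in `K`. -/
def momentSet (K : Set ℝ) : Set (ℕ → ℝ) :=
  {s | ∃ μ : Measure ℝ, IsAdmissible μ ∧ μ Kᶜ = 0 ∧ ∀ k, s k = moment μ k}

/-- An absolutely monotonic entire function: a power series with non-negative
coefficients converging at every real point. -/
def AbsolutelyMonotonicEntire (G : ℝ → ℝ) : Prop :=
  ∃ c : ℕ → ℝ, (∀ n, 0 ≤ c n) ∧ ∀ x : ℝ, HasSum (fun n => c n * x ^ n) (G x)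


lemma fin_adm {μ : Measure ℝ} (h : IsAdmissible μ) : IsFiniteMeasure μ := by
  have := h 0
  simp only [pow_zero] at this
  exact (integrable_const_iff_isFiniteMeasure one_ne_zero).1 this

lemma ae_mem {μ : Measure ℝ} (h0 : μ (Icc (-1 : ℝ) 1)ᶜ = 0) : ∀ᵐ x ∂μ, x ∈ Icc (-1 : ℝ) 1 :=
  mem_ae_iff.2 h0

lemma adm_fin {μ : Measure ℝ} [IsFiniteMeasure μ] (h0 : μ (Icc (-1 : ℝ) 1)ᶜ = 0) :
    IsAdmissible μ := by
  intro k
  refine Integrable.of_bound (by fun_prop) 1 ?_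
  filter_upwards [ae_mem h0] with x hx
  rw [norm_pow]
  exact pow_le_one₀ (norm_nonneg _) (abs_le.2 hx)

lemma mem_fin {μ : Measure ℝ} [IsFiniteMeasure μ] (h0 : μ (Icc (-1 : ℝ) 1)ᶜ = 0) :
    (fun k => moment μ k) ∈ momentSet (Icc (-1 : ℝ) 1) :=
  ⟨μ, adm_fin h0, h0, fun _ => rfl⟩

lemma mem_atom {a u : ℝ} (ha : 0 ≤ a) (hu : u ∈ Icc (-1 : ℝ) 1) :
    (fun k => a * u ^ k) ∈ momentSet (Icc (-1 : ℝ) 1) := by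
  have h0 : (ENNReal.ofReal a • Measure.dirac u) (Icc (-1 : ℝ) 1)ᶜ = 0 := by
    simp [hu.1, hu.2]
  have : IsFiniteMeasure (ENNReal.ofReal a • Measure.dirac u) := by
    constructor
    simp
  convert! mem_fin h0 using 2 with k
  simp [moment, ha]

lemma mem_add {s t : ℕ → ℝ} (hs : s ∈ momentSet (Icc (-1 : ℝ) 1))
    (ht : t ∈ momentSet (Icc (-1 : ℝ) 1)) :
    (fun k => s k + t k) ∈ momentSet (Icc (-1 : ℝ) 1) := by
  obtain ⟨μ, h1, h2, h3⟩ := hs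
  obtain ⟨ν, g1, g2, g3⟩ := ht
  refine ⟨μ + ν, fun k => (h1 k).add_measure (g1 k), by simp [h2, g2], fun k => ?_⟩
  change s k + t k = _
  rw [h3, g3, moment, moment, moment, integral_add_measure (h1 k) (g1 k)]

lemma mem_mul {s t : ℕ → ℝ} (hs : s ∈ momentSet (Icc (-1 : ℝ) 1))
    (ht : t ∈ momentSet (Icc (-1 : ℝ) 1)) :
    (fun k => s k * t k) ∈ momentSet (Icc (-1 : ℝ) 1) := by
  obtain ⟨μ, h1, h2, h3⟩ := hs
  obtain ⟨ν, g1, g2, g3⟩ := ht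
  have := fin_adm h1
  have := fin_adm g1
  have hm : Measurable (fun p : ℝ × ℝ => p.1 * p.2) := by fun_prop
  have h0 : ((μ.prod ν).map (fun p => p.1 * p.2)) (Icc (-1 : ℝ) 1)ᶜ = 0 := by
    rw [Measure.map_apply hm measurableSet_Icc.compl]
    have e1 : ∀ᵐ p ∂(μ.prod ν), p.1 ∈ Icc (-1 : ℝ) 1 :=
      Measure.quasiMeasurePreserving_fst.ae (ae_mem h2)
    have e2 : ∀ᵐ p ∂(μ.prod ν), p.2 ∈ Icc (-1 : ℝ) 1 :=
      Measure.quasiMeasurePreserving_snd.ae (ae_mem g2)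
    have e3 : ∀ᵐ p ∂(μ.prod ν), p.1 * p.2 ∈ Icc (-1 : ℝ) 1 := by
      filter_upwards [e1, e2] with p a b
      have a := abs_le.2 a
      have b := abs_le.2 b
      refine abs_le.1 ?_
      rw [abs_mul]
      exact mul_le_one₀ a (abs_nonneg _) b
    exact mem_ae_iff.1 e3
  convert! mem_fin h0 using 2 with k
  rw [h3, g3, moment, moment, moment, integral_map hm.aemeasurable (by fun_prop)]
  simp only [mul_pow]
  rw [integral_prod_mul (fun x : ℝ => x ^ k) (fun x : ℝ => x ^ k)]

lemma mem_pow {s : ℕ → ℝ} (hs : s ∈ momentSet (Icc (-1 : ℝ) 1)) (n : ℕ) :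
    (fun k => s k ^ n) ∈ momentSet (Icc (-1 : ℝ) 1) := by
  induction n with
  | zero => simpa using mem_atom (a := 1) (u := 1) (by norm_num) (by norm_num)
  | succ n ih => simpa only [pow_succ] using mem_mul ih hs

lemma mem_hasSum {s : ℕ → ℕ → ℝ} {t : ℕ → ℝ} (hs : ∀ n, s n ∈ momentSet (Icc (-1 : ℝ) 1))
    (ht : ∀ k, HasSum (fun n => s n k) (t k)) : t ∈ momentSet (Icc (-1 : ℝ) 1) := by
  choose μ h1 h2 h3 using hs
  have hf : ∀ n, IsFiniteMeasure (μ n) := fun n => fin_adm (h1 n)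
  have h0 : Measure.sum μ (Icc (-1 : ℝ) 1)ᶜ = 0 := by
    rw [Measure.sum_apply _ measurableSet_Icc.compl]; simp [h2]
  have hmass : ∀ n, μ n univ = ENNReal.ofReal (s n 0) := by
    intro n
    rw [h3, moment]
    simp [measureReal_def]
  have hnn : ∀ n, 0 ≤ s n 0 := by
    intro n
    rw [h3, moment]
    simp
  have : IsFiniteMeasure (Measure.sum μ) := by
    constructor
    rw [Measure.sum_apply _ MeasurableSet.univ]
    simp only [hmass]
    rw [← ENNReal.ofReal_tsum_of_nonneg hnn (ht 0).summable]
    exact ENNReal.ofReal_lt_top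
  convert! mem_fin h0 using 2 with k
  have := hasSum_integral_measure (adm_fin h0 k)
  refine (ht k).unique ?_
  simpa [h3, moment] using this

lemma backward {G : ℝ → ℝ} (hG : AbsolutelyMonotonicEntire G) {s : ℕ → ℝ}
    (hs : s ∈ momentSet (Icc (-1 : ℝ) 1)) :
    (fun k => G (s k)) ∈ momentSet (Icc (-1 : ℝ) 1) := by
  obtain ⟨c, hc, h⟩ := hG
  refine mem_hasSum (s := fun n k => c n * s k ^ n) (fun n => ?_) (fun k => h (s k))
  have := mem_mul (mem_atom (a := c n) (u := 1) (hc n) (by norm_num)) (mem_pow hs n)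
  simpa using this

lemma int_poly {μ : Measure ℝ} (h : IsAdmissible μ) (K : ℕ) (q : Polynomial ℝ) :
    ∫ x, x ^ K * q.eval x ∂μ =
      ∑ k ∈ Finset.range (q.natDegree + 1), q.coeff k * moment μ (K + k) := by
  simp only [Polynomial.eval_eq_sum_range, Finset.mul_sum]
  rw [integral_finsetSum]
  · refine Finset.sum_congr rfl fun k _ => ?_
    rw [moment, ← integral_const_mul]
    congr 1; ext x; ring
  · intro k _
    have := (h (K + k)).const_mul (q.coeff k)
    refine this.congr (ae_of_all _ fun x => ?_)
    simp only; ring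

lemma pos_poly {s : ℕ → ℝ} (hs : s ∈ momentSet (Icc (-1 : ℝ) 1)) (q : Polynomial ℝ)
    (hq : ∀ x ∈ Icc (-1 : ℝ) 1, 0 ≤ q.eval x) :
    0 ≤ ∑ k ∈ Finset.range (q.natDegree + 1), q.coeff k * s k := by
  obtain ⟨μ, h1, h2, h3⟩ := hs
  have := int_poly h1 0 q
  simp only [pow_zero, one_mul, zero_add, ← h3] at this
  rw [← this]
  refine integral_nonneg_of_ae ?_
  filter_upwards [ae_mem h2] with x hx using hq x hx

lemma tend_zero {μ : Measure ℝ} (h : IsAdmissible μ) (h2 : μ (Icc (-1 : ℝ) 1)ᶜ = 0) (K : ℕ) :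
    Tendsto (fun N : ℕ => ∫ x, x * (1 - x ^ (2 * (K + 1))) ^ N ∂μ) atTop (nhds 0) := by
  have := fin_adm h
  have e : (0 : ℝ) = ∫ x, (0 : ℝ) ∂μ := by simp
  rw [e]
  have key : ∀ x ∈ Icc (-1 : ℝ) 1, 0 ≤ x ^ (2 * (K + 1)) ∧ x ^ (2 * (K + 1)) ≤ 1 := by
    intro x hx
    refine ⟨by rw [pow_mul]; positivity, ?_⟩
    rw [pow_mul]
    exact pow_le_one₀ (sq_nonneg x) ((sq_le_one_iff_abs_le_one x).2 (abs_le.2 hx))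
  refine tendsto_integral_of_dominated_convergence (fun _ => 1) (fun n => by fun_prop)
    (integrable_const _) (fun n => ?_) ?_
  · filter_upwards [ae_mem h2] with x hx
    obtain ⟨k1, k2⟩ := key x hx
    rw [norm_mul, norm_pow]
    refine mul_le_one₀ (abs_le.2 hx) (by positivity) (pow_le_one₀ (norm_nonneg _) ?_)
    rw [Real.norm_eq_abs, abs_le]; constructor <;> linarith
  · filter_upwards [ae_mem h2] with x hx
    obtain ⟨k1, k2⟩ := key x hx
    by_cases hx0 : x = 0
    · simp [hx0]
    · have k3 : 0 < x ^ (2 * (K + 1)) := by rw [pow_mul]; positivity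
      have := (tendsto_pow_atTop_nhds_zero_of_lt_one (r := 1 - x ^ (2 * (K + 1)))
        (by linarith) (by linarith)).const_mul x
      simpa using this

lemma first_moment {s t : ℕ → ℝ} (hs : s ∈ momentSet (Icc (-1 : ℝ) 1))
    (ht : t ∈ momentSet (Icc (-1 : ℝ) 1)) (K : ℕ) (h : ∀ k, K ≤ k → s k = t k) :
    s 1 = t 1 := by
  obtain ⟨μ, h1, h2, h3⟩ := hs
  obtain ⟨ν, g1, g2, g3⟩ := ht
  have key : ∀ N : ℕ, ∃ q : Polynomial ℝ, ∀ x : ℝ,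
      x * (1 - x ^ (2 * (K + 1))) ^ N = x + x ^ K * q.eval x := by
    intro N
    induction N with
    | zero => exact ⟨0, by simp⟩
    | succ N ih =>
      obtain ⟨q, hq⟩ := ih
      refine ⟨q * (1 - Polynomial.X ^ (2 * (K + 1))) - Polynomial.X ^ (K + 3), fun x => ?_⟩
      rw [pow_succ, ← mul_assoc, hq]
      simp
      ring
  have hd : ∀ N : ℕ, ∫ x, x * (1 - x ^ (2 * (K + 1))) ^ N ∂μ -
      ∫ x, x * (1 - x ^ (2 * (K + 1))) ^ N ∂ν = s 1 - t 1 := by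
    intro N
    obtain ⟨q, hq⟩ := key N
    have aux : ∀ {ρ : Measure ℝ}, IsAdmissible ρ → Integrable (fun x => x ^ K * q.eval x) ρ := by
      intro ρ hρ
      simp only [Polynomial.eval_eq_sum_range, Finset.mul_sum]
      refine integrable_finsetSum _ fun k _ => ?_
      have := (hρ (K + k)).const_mul (q.coeff k)
      refine this.congr (ae_of_all _ fun x => ?_)
      simp only; ring
    have e : ∀ {ρ : Measure ℝ}, IsAdmissible ρ → ∫ x, x * (1 - x ^ (2 * (K + 1))) ^ N ∂ρ =
        moment ρ 1 + ∑ k ∈ Finset.range (q.natDegree + 1), q.coeff k * moment ρ (K + k) := by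
      intro ρ hρ
      have h11 : Integrable (fun x : ℝ => x) ρ := by simpa using hρ 1
      simp only [hq]
      rw [integral_add h11 (aux hρ), int_poly hρ]
      simp [moment]
    rw [e h1, e g1]
    simp only [← h3, ← g3]
    have : ∀ k, s (K + k) = t (K + k) := fun k => h _ (by omega)
    simp [this]
  have l := (tend_zero h1 h2 K).sub (tend_zero g1 g2 K)
  simp only [hd] at l
  have := tendsto_nhds_unique l tendsto_const_nhds
  linarith

open scoped ContDiff Nat in
lemma taylor_lag {f : ℝ → ℝ} (hf : ContDiff ℝ ∞ f) {x₀ x : ℝ} (hx : x₀ < x) (n : ℕ) :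
    ∃ ξ ∈ Ioo x₀ x, f x = ∑ k ∈ Finset.range (n + 1), iteratedDeriv k f x₀ / k ! * (x - x₀) ^ k +
      iteratedDeriv (n + 1) f ξ * (x - x₀) ^ (n + 1) / (n + 1)! := by
  have hfn : ∀ n : ℕ, ContDiff ℝ n f := fun n => hf.of_le (by exact_mod_cast le_top)
  obtain ⟨ξ, h1, h2⟩ := taylor_mean_remainder_lagrange_iteratedDeriv (n := n) hx.ne
    (hfn (n + 1)).contDiffOn
  rw [uIoo_of_lt hx] at h1
  refine ⟨ξ, h1, ?_⟩
  rw [← h2, taylor_within_apply]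
  have : ∀ k, iteratedDerivWithin k f (uIcc x₀ x) x₀ = iteratedDeriv k f x₀ := by
    intro k
    refine iteratedDerivWithin_eq_iteratedDeriv ?_ (hfn k).contDiffAt left_mem_uIcc
    rw [uIcc_of_lt hx]
    exact uniqueDiffOn_Icc hx
  simp only [this, smul_eq_mul]
  rw [eq_comm, ← eq_sub_iff_add_eq', sub_right_inj]
  refine Finset.sum_congr rfl fun k _ => ?_
  field_simp

/-- The basic positivity property. -/
def HPos (f : ℝ → ℝ) : Prop := ∀ a b : ℝ, 0 ≤ a → 0 ≤ b → ∀ q : Polynomial ℝ,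
  (∀ x ∈ Icc (-1 : ℝ) 1, 0 ≤ q.eval x) →
  0 ≤ ∑ k ∈ Finset.range (q.natDegree + 1), q.coeff k * f (a + b * (1 / 2) ^ k)

open scoped ContDiff Nat in
lemma loewner {f : ℝ → ℝ} (hf : ContDiff ℝ ∞ f) (H : HPos f) (n : ℕ) {a : ℝ} (ha : 0 ≤ a) :
    0 ≤ iteratedDeriv n f a := by
  have hfn : ∀ n : ℕ, ContDiff ℝ n f := fun n => hf.of_le (by exact_mod_cast le_top)
  cases n with
  | zero =>
    have := H a 0 ha le_rfl 1 (by simp)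
    simpa using this
  | succ n =>
    set q : Polynomial ℝ :=
      ∏ j ∈ Finset.range (n + 1), (Polynomial.X - Polynomial.C ((1 / 2 : ℝ) ^ j)) ^ 2 with hq
    have hqe : ∀ x, q.eval x = ∏ j ∈ Finset.range (n + 1), (x - (1 / 2 : ℝ) ^ j) ^ 2 := by
      intro x
      simp [hq, Polynomial.eval_prod]
    have hq0 : ∀ x, 0 ≤ q.eval x := by
      intro x; rw [hqe]; exact Finset.prod_nonneg fun _ _ => sq_nonneg _
    have hqz : ∀ j ∈ Finset.range (n + 1), q.eval ((1 / 2 : ℝ) ^ j) = 0 := by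
      intro j hj; rw [hqe]; exact Finset.prod_eq_zero hj (by simp)
    have hqp : 0 < q.eval ((1 / 2 : ℝ) ^ (n + 1)) := by
      rw [hqe]
      refine Finset.prod_pos fun j hj => ?_
      have : (1 / 2 : ℝ) ^ (n + 1) < (1 / 2 : ℝ) ^ j :=
        pow_lt_pow_right_of_lt_one₀ (by norm_num) (by norm_num) (Finset.mem_range.1 hj)
      have : (1 / 2 : ℝ) ^ (n + 1) - (1 / 2 : ℝ) ^ j ≠ 0 := by linarith
      positivity
    set g : ℝ → ℝ := fun b =>
      ∑ k ∈ Finset.range (q.natDegree + 1), q.coeff k * f (a + (1 / 2) ^ k * b) with hg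
    have hgc : ContDiff ℝ ∞ g := by
      rw [hg]; fun_prop
    have hgd : ∀ j b, iteratedDeriv j g b = ∑ k ∈ Finset.range (q.natDegree + 1),
        q.coeff k * (((1 / 2) ^ k) ^ j * iteratedDeriv j f (a + (1 / 2) ^ k * b)) := by
      intro j b
      have hfj := hfn j
      rw [hg, iteratedDeriv_fun_sum (fun k _ => by fun_prop)]
      refine Finset.sum_congr rfl fun k _ => ?_
      rw [iteratedDeriv_const_mul_field]
      congr 1
      have h1 : ContDiff ℝ j (fun z => f (a + z)) := by fun_prop
      have := iteratedDeriv_comp_const_mul h1 ((1 / 2 : ℝ) ^ k)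
      rw [this, iteratedDeriv_comp_const_add]
    have hg0 : ∀ j, iteratedDeriv j g 0 = q.eval ((1 / 2 : ℝ) ^ j) * iteratedDeriv j f a := by
      intro j
      rw [hgd, Polynomial.eval_eq_sum_range, Finset.sum_mul]
      refine Finset.sum_congr rfl fun k _ => ?_
      rw [mul_zero, add_zero, ← pow_mul, ← pow_mul, mul_comm k j]
      ring
    have hpos : ∀ b : ℝ, 0 ≤ b → 0 ≤ g b := by
      intro b hb
      have := H a b ha hb q (fun x _ => hq0 x)
      simp only [hg]
      simpa only [mul_comm b] using this
    have key : 0 ≤ iteratedDeriv (n + 1) g 0 := by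
      by_contra! hneg
      have hc : Continuous (iteratedDeriv (n + 1) g) :=
        (hgc.of_le (by exact_mod_cast le_top) : ContDiff ℝ ((n + 1 : ℕ)) g).continuous_iteratedDeriv
          (n + 1) le_rfl
      have hev := hc.continuousAt.eventually_lt_const hneg
      obtain ⟨ε, hε, hball⟩ := Metric.eventually_nhds_iff.1 hev
      obtain ⟨ξ, hξ, e⟩ := taylor_lag hgc hε n
      have z : ∑ k ∈ Finset.range (n + 1), iteratedDeriv k g 0 / k ! * (ε - 0) ^ k = 0 := by
        refine Finset.sum_eq_zero fun k hk => ?_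
        rw [hg0, hqz k hk]; simp
      have l := hball (y := ξ) (by
        rw [Real.dist_eq, sub_zero, abs_of_pos hξ.1]; exact hξ.2)
      have p := hpos ε hε.le
      rw [e, z, zero_add, sub_zero, mul_div_assoc] at p
      have : 0 < ε ^ (n + 1) / (n + 1)! := by positivity
      nlinarith
    rw [hg0] at key
    exact nonneg_of_mul_nonneg_right key hqp

open scoped ContDiff Nat in
lemma bernstein_thm {f : ℝ → ℝ} (hf : ContDiff ℝ ∞ f)
    (H : ∀ n : ℕ, ∀ a : ℝ, 0 ≤ a → 0 ≤ iteratedDeriv n f a) {x : ℝ} (hx : 0 ≤ x) :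
    HasSum (fun n : ℕ => iteratedDeriv n f 0 / n ! * x ^ n) (f x) := by
  rcases hx.eq_or_lt with rfl | hx
  · have := hasSum_single (f := fun n : ℕ => iteratedDeriv n f 0 / n ! * (0 : ℝ) ^ n) 0
      (fun n hn => by simp [hn])
    simpa using this
  have hmono : ∀ n : ℕ, MonotoneOn (iteratedDeriv n f) (Ici 0) := by
    intro n
    have hd : Differentiable ℝ (iteratedDeriv n f) :=
      hf.differentiable_iteratedDeriv n (by exact_mod_cast ENat.natCast_lt_top n)
    refine monotoneOn_of_deriv_nonneg (convex_Ici 0) hd.continuous.continuousOn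
      hd.differentiableOn fun y hy => ?_
    rw [← iteratedDeriv_succ]
    rw [interior_Ici] at hy
    exact H _ _ (le_of_lt hy)
  have hnn : ∀ n : ℕ, 0 ≤ iteratedDeriv n f 0 / n ! * x ^ n := by
    intro n
    have := H n 0 le_rfl
    positivity
  rw [hasSum_iff_tendsto_nat_of_nonneg hnn, ← tendsto_add_atTop_iff_nat 1]
  have hlow : ∀ n : ℕ, f x - f (3 * x) * (1 / 2) ^ (n + 1) ≤
      ∑ k ∈ Finset.range (n + 1), iteratedDeriv k f 0 / k ! * x ^ k := by
    intro n
    obtain ⟨ξ, hξ, e⟩ := taylor_lag hf hx n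
    obtain ⟨η, hη, e'⟩ := taylor_lag hf (show x < 3 * x by linarith) n
    have m : iteratedDeriv (n + 1) f ξ ≤ iteratedDeriv (n + 1) f η :=
      hmono _ hξ.1.le (hx.trans hη.1).le (hξ.2.trans hη.1).le
    have s : 0 ≤ ∑ k ∈ Finset.range (n + 1), iteratedDeriv k f x / k ! * (3 * x - x) ^ k := by
      refine Finset.sum_nonneg fun k _ => ?_
      have := H k x hx.le
      have : 0 ≤ 3 * x - x := by linarith
      positivity
    have r : iteratedDeriv (n + 1) f η * x ^ (n + 1) / (n + 1)! =
        (iteratedDeriv (n + 1) f η * (3 * x - x) ^ (n + 1) / (n + 1)!) * (1 / 2) ^ (n + 1) := by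
      have : x ^ (n + 1) = (3 * x - x) ^ (n + 1) * (1 / 2) ^ (n + 1) := by
        rw [← mul_pow]; congr 1; ring
      rw [this]; ring
    have r2 : iteratedDeriv (n + 1) f ξ * x ^ (n + 1) / (n + 1)! ≤
        iteratedDeriv (n + 1) f η * x ^ (n + 1) / (n + 1)! := by gcongr
    have r3 : (iteratedDeriv (n + 1) f η * (3 * x - x) ^ (n + 1) / (n + 1)!) * (1 / 2) ^ (n + 1)
        ≤ f (3 * x) * (1 / 2) ^ (n + 1) := by
      gcongr
      linarith
    simp only [sub_zero] at e
    linarith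
  have hup : ∀ n : ℕ,
      ∑ k ∈ Finset.range (n + 1), iteratedDeriv k f 0 / k ! * x ^ k ≤ f x := by
    intro n
    obtain ⟨ξ, hξ, e⟩ := taylor_lag hf hx n
    simp only [sub_zero] at e
    have := H (n + 1) ξ hξ.1.le
    have : 0 ≤ iteratedDeriv (n + 1) f ξ * x ^ (n + 1) / (n + 1)! := by positivity
    linarith
  refine tendsto_of_tendsto_of_tendsto_of_le_of_le ?_ tendsto_const_nhds hlow hup
  have := ((tendsto_pow_atTop_nhds_zero_of_lt_one (r := (1 / 2 : ℝ)) (by norm_num)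
    (by norm_num)).comp (tendsto_add_atTop_nat 1)).const_mul (f (3 * x))
  simpa using this.const_sub (f x)

open scoped ContDiff in
lemma mollify {F : ℝ → ℝ} (hF : MonotoneOn F (Ici 0)) (H : HPos F) {δ : ℝ} (hδ : 0 < δ) :
    ∃ f : ℝ → ℝ, ContDiff ℝ ∞ f ∧ HPos f ∧ ∀ x, 0 ≤ x → F x ≤ f x ∧ f x ≤ F (x + δ) := by
  set E : ℝ → ℝ := fun x => F (max x 0) with hE
  have hEm : Monotone E := fun x y h =>
    hF (le_max_right x 0) (le_max_right y 0) (max_le_max_right 0 h)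
  have hEp : ∀ x, 0 ≤ x → E x = F x := fun x hx => by simp [hE, hx]
  let φ : ContDiffBump (0 : ℝ) := ⟨δ / 4, δ / 2, by positivity, by linarith⟩
  set w : ℝ → ℝ := φ.normed volume with hw
  have hwc : Continuous w := φ.continuous_normed
  have hwnn : ∀ t, 0 ≤ w t := φ.nonneg_normed
  have hwz : ∀ t, ¬ |t| < δ / 2 → w t = 0 := by
    intro t ht
    by_contra h
    have : t ∈ Function.support w := h
    rw [hw, φ.support_normed_eq] at this
    rw [Metric.mem_ball, Real.dist_eq, sub_zero] at this
    exact ht this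
  have hwi : Integrable w := φ.integrable_normed
  have hint : ∀ y, Integrable (fun t => w t * E (y - t)) := by
    intro y
    have ha : Antitone (fun t => E (y - t)) := fun s t h => hEm (by linarith)
    exact ha.locallyIntegrable.integrable_smul_left_of_hasCompactSupport hwc
      φ.hasCompactSupport_normed
  have hc : ContDiff ℝ ∞ (convolution w E (ContinuousLinearMap.lsmul ℝ ℝ) volume) :=
    φ.hasCompactSupport_normed.contDiff_convolution_left _ φ.contDiff_normed hEm.locallyIntegrable
  set f : ℝ → ℝ := fun x => ∫ t, w t * E (x + δ / 2 - t) with hf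
  refine ⟨f, ?_, ?_, ?_⟩
  · have : f = fun x => convolution w E (ContinuousLinearMap.lsmul ℝ ℝ) volume (x + δ / 2) := by
      ext x; simp [hf, convolution]
    rw [this]
    fun_prop
  · intro a b ha hb q hq
    simp only [hf, ← integral_const_mul]
    rw [← integral_finsetSum _ (fun k _ => (hint _).const_mul _)]
    refine integral_nonneg fun t => ?_
    by_cases ht : |t| < δ / 2
    · have ht' := abs_lt.1 ht
      have := H (a + δ / 2 - t) b (by linarith) hb q hq
      have := mul_nonneg (hwnn t) this
      rw [Finset.mul_sum] at this
      simp only [Pi.zero_apply]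
      convert! this using 2 with k
      rw [hEp]
      · rw [show a + b * (1 / 2) ^ k + δ / 2 - t = a + δ / 2 - t + b * (1 / 2) ^ k by ring]
        ring
      · have : 0 ≤ b * (1 / 2) ^ k := by positivity
        linarith
    · simp [hwz t ht]
  · intro x hx
    have hconst : ∀ c : ℝ, ∫ t, w t * c = c := by
      intro c
      rw [integral_mul_const, hw, φ.integral_normed, one_mul]
    constructor
    · rw [← hconst (F x)]
      refine integral_mono (hwi.mul_const _) (hint _) fun t => ?_
      by_cases ht : |t| < δ / 2
      · have ht' := abs_lt.1 ht
        refine mul_le_mul_of_nonneg_left ?_ (hwnn t)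
        rw [← hEp x hx]
        exact hEm (by linarith)
      · simp [hwz t ht]
    · rw [← hconst (F (x + δ))]
      refine integral_mono (hint _) (hwi.mul_const _) fun t => ?_
      by_cases ht : |t| < δ / 2
      · have ht' := abs_lt.1 ht
        refine mul_le_mul_of_nonneg_left ?_ (hwnn t)
        rw [← hEp (x + δ) (by linarith)]
        exact hEm (by linarith)
      · simp [hwz t ht]

lemma limit_coeff (c : ℕ → ℕ → ℝ) (f : ℕ → ℝ → ℝ) (B : ℝ → ℝ) (hc : ∀ m n, 0 ≤ c m n)
    (hs : ∀ m x, 0 ≤ x → HasSum (fun n => c m n * x ^ n) (f m x))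
    (hB : ∀ m x, 0 ≤ x → f m x ≤ B x) :
    ∃ G : ℝ → ℝ, AbsolutelyMonotonicEntire G ∧
      ∀ x, 0 ≤ x → Tendsto (fun m => f m x) (hyperfilter ℕ : Filter ℕ) (nhds (G x)) := by
  have hb : ∀ m n x, 0 ≤ x → c m n * x ^ n ≤ B x := fun m n x hx =>
    (le_hasSum (hs m x hx) n (fun j _ => mul_nonneg (hc m j) (pow_nonneg hx j))).trans (hB m x hx)
  have hlim : ∀ n, ∃ d, 0 ≤ d ∧
      Tendsto (fun m => c m n) (hyperfilter ℕ : Filter ℕ) (nhds d) := by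
    intro n
    have hk : IsCompact (Icc (0 : ℝ) (B 1)) := isCompact_Icc
    have := hk.ultrafilter_le_nhds ((hyperfilter ℕ).map (fun m => c m n)) (by
      rw [le_principal_iff]
      refine Ultrafilter.mem_map.2 (Filter.univ_mem' fun m => ?_)
      have := hb m n 1 zero_le_one
      exact ⟨hc m n, by simpa using this⟩)
    obtain ⟨d, hd, hd'⟩ := this
    exact ⟨d, hd.1, hd'⟩
  choose d hd0 hd using hlim
  have hb' : ∀ m n (x : ℝ), ‖c m n * x ^ n‖ ≤ B (|x| + 1) * (|x| / (|x| + 1)) ^ n := by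
    intro m n x
    have h1 : 0 < |x| + 1 := by positivity
    have := hb m n (|x| + 1) h1.le
    rw [norm_mul, norm_pow, Real.norm_eq_abs, Real.norm_eq_abs, abs_of_nonneg (hc m n), div_pow,
      ← mul_div_assoc, le_div_iff₀ (by positivity)]
    calc c m n * |x| ^ n * (|x| + 1) ^ n = (c m n * (|x| + 1) ^ n) * |x| ^ n := by ring
      _ ≤ _ := by gcongr
  have hsb : ∀ x : ℝ, Summable (fun n : ℕ => B (|x| + 1) * (|x| / (|x| + 1)) ^ n) := by
    intro x
    have h1 : 0 < |x| + 1 := by positivity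
    refine (summable_geometric_of_lt_one (by positivity) ?_).mul_left _
    rw [div_lt_one h1]; linarith
  have htd : ∀ n (x : ℝ), Tendsto (fun m => c m n * x ^ n) (hyperfilter ℕ : Filter ℕ)
      (nhds (d n * x ^ n)) := fun n x => (hd n).mul_const _
  refine ⟨fun x => ∑' n, d n * x ^ n, ⟨d, hd0, fun x => ?_⟩, fun x hx => ?_⟩
  · refine Summable.hasSum (Summable.of_norm_bounded (hsb x) fun n => ?_)
    exact le_of_tendsto' (htd n x).norm (fun m => hb' m n x)
  · have := tendsto_tsum_of_dominated_convergence (𝓕 := (hyperfilter ℕ : Filter ℕ)) (hsb x)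
      (fun n => htd n x) (Eventually.of_forall fun m n => hb' m n x)
    refine this.congr fun m => (hs m x hx).tsum_eq

lemma ame_cont {G : ℝ → ℝ} (hG : AbsolutelyMonotonicEntire G) : Continuous G := by
  obtain ⟨c, hc, h⟩ := hG
  rw [continuous_iff_continuousAt]
  intro x
  have h1 : ContinuousOn (fun y => ∑' n, c n * y ^ n) (Ioo (-(|x| + 1)) (|x| + 1)) := by
    refine continuousOn_tsum (u := fun n => c n * (|x| + 1) ^ n) (fun n => by fun_prop)
      (h _).summable fun n y hy => ?_
    rw [norm_mul, norm_pow, Real.norm_eq_abs, Real.norm_eq_abs, abs_of_nonneg (hc n)]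
    have := (abs_lt.2 hy).le
    have := hc n
    gcongr
  have e : (fun y => ∑' n, c n * y ^ n) = G := funext fun y => (h y).tsum_eq
  rw [e] at h1
  refine h1.continuousAt (Ioo_mem_nhds ?_ ?_)
  · have := neg_abs_le x; linarith
  · have := le_abs_self x; linarith

open scoped Nat in
lemma forward {F : ℝ → ℝ} (hF : ∀ s ∈ momentSet (Icc (-1 : ℝ) 1),
    (fun k => F (s k)) ∈ momentSet (Icc (-1 : ℝ) 1)) : AbsolutelyMonotonicEntire F := by
  have hat : ∀ a b u : ℝ, 0 ≤ a → 0 ≤ b → u ∈ Icc (-1 : ℝ) 1 →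
      (fun k : ℕ => a + b * u ^ k) ∈ momentSet (Icc (-1 : ℝ) 1) := by
    intro a b u ha hb hu
    simpa using mem_add (mem_atom (u := 1) ha (by norm_num)) (mem_atom hb hu)
  have H : HPos F := fun a b ha hb q hq =>
    pos_poly (hF _ (hat a b (1 / 2) ha hb (by norm_num))) q hq
  have hm : MonotoneOn F (Ici 0) := by
    intro x hx y hy hxy
    have := pos_poly (hF _ (hat x (y - x) 0 hx (by linarith) (by norm_num)))
      (Polynomial.C 1 - Polynomial.X) (fun t ht => by simpa using ht.2)
    have hdeg : (Polynomial.C 1 - Polynomial.X : Polynomial ℝ).natDegree = 1 := by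
      compute_degree!
    rw [hdeg] at this
    simp [Finset.sum_range_succ, Polynomial.coeff_X, Polynomial.coeff_one] at this
    linarith
  have hδ : ∀ m : ℕ, (0 : ℝ) < 1 / (m + 1) := fun m => by positivity
  choose f h1 h2 h3 using fun m => mollify hm H (hδ m)
  obtain ⟨G, hG, hlim⟩ := limit_coeff (fun m n => iteratedDeriv n (f m) 0 / n !) f
    (fun x => F (x + 1))
    (fun m n => div_nonneg (loewner (h1 m) (h2 m) n le_rfl) (by positivity))
    (fun m x hx => bernstein_thm (h1 m) (fun n a ha => loewner (h1 m) (h2 m) n ha) hx)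
    (fun m x hx => ((h3 m x hx).2).trans (by
      have : (1 : ℝ) / (m + 1) ≤ 1 := by
        rw [div_le_one (by positivity)]; linarith [(Nat.cast_nonneg m : (0 : ℝ) ≤ m)]
      have := hδ m
      refine hm (mem_Ici.2 ?_) (mem_Ici.2 ?_) ?_ <;> linarith))
  have hGc := ame_cont hG
  have hlo : ∀ x, 0 ≤ x → F x ≤ G x := fun x hx =>
    ge_of_tendsto' (hlim x hx) fun m => (h3 m x hx).1
  have hup : ∀ x y, 0 ≤ x → x < y → G x ≤ F y := by
    intro x y hx hxy
    refine le_of_tendsto (hlim x hx) ?_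
    have hat : ∀ᶠ m : ℕ in atTop, (1 : ℝ) / (m + 1) < y - x :=
      tendsto_one_div_add_atTop_nhds_zero_nat.eventually_lt_const (by linarith)
    have hle : (hyperfilter ℕ : Filter ℕ) ≤ atTop := by
      rw [← Nat.cofinite_eq_atTop]; exact hyperfilter_le_cofinite
    filter_upwards [hle hat] with m hm'
    have := hδ m
    refine ((h3 m x hx).2).trans (hm (mem_Ici.2 ?_) (mem_Ici.2 ?_) ?_) <;> linarith
  have heq : ∀ x, 0 < x → F x = G x := by
    intro x hx
    refine le_antisymm (hlo x hx.le) ?_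
    refine le_of_tendsto (hGc.continuousWithinAt (s := Iio x) (x := x)) ?_
    filter_upwards [Ioo_mem_nhdsLT hx] with y hy
    exact hup y x hy.1.le hy.2
  have hall : F = G := by
    ext x
    by_cases hx : 0 < x
    · exact heq x hx
    push Not at hx
    have hs := hat 1 (2 * (1 - x)) (-1 / 2) zero_le_one (by linarith) (by norm_num)
    have ht : Tendsto (fun k : ℕ => 1 + 2 * (1 - x) * (-1 / 2 : ℝ) ^ k) atTop (nhds 1) := by
      have := (tendsto_pow_atTop_nhds_zero_of_abs_lt_one (r := (-1 / 2 : ℝ))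
        (by rw [abs_lt]; norm_num)).const_mul (2 * (1 - x))
      simpa using this.const_add 1
    obtain ⟨K, hK⟩ := eventually_atTop.1 (ht.eventually_const_lt zero_lt_one)
    have := first_moment (hF _ hs) (backward hG hs) K (fun k hk => heq _ (hK k hk))
    have e : 1 + 2 * (1 - x) * (-1 / 2 : ℝ) ^ 1 = x := by ring
    simpa only [e] using this
  rw [hall]
  exact hG

/-- Moment-sequence transforms: `F` maps `M([-1,1])` into itself entrywise iff `F` is the
restriction to `ℝ` of an absolutely monotonic entire function. -/
theorem moment_transform_Icc_neg_one_one (F : ℝ → ℝ) :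
    (∀ s ∈ momentSet (Set.Icc (-1 : ℝ) 1),
      (fun k => F (s k)) ∈ momentSet (Set.Icc (-1 : ℝ) 1)) ↔
    AbsolutelyMonotonicEntire F := by
  exact ⟨fun h => forward h, fun h s hs => backward h hs⟩
end

section
/- A function F : [0,∞) → ℝ maps M([0,1]) into itself when applied entrywise if and only if F is absolutely monotonic on (0,∞) — that is, F is infinitely differentiable on (0,∞) with F^{(k)}(x) ≥ 0 for every x > 0 and every integer k ≥ 0 (in particular F is non-decreasing there) — and 0 ≤ F(0) ≤ lim_{ε→0⁺} F(ε). -/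
open MeasureTheory Filter Set
open scoped ENNReal

def AMFam (D : ℕ → ℝ → ℝ) : Prop :=
  ∀ k : ℕ, ∀ x : ℝ, 0 < x → HasDerivAt (D k) (D (k + 1) x) x ∧ 0 ≤ D k x

noncomputable def trem (D : ℕ → ℝ → ℝ) (n : ℕ) (a x : ℝ) : ℝ :=
  D 0 x - ∑ k ∈ Finset.range n, D k a * (x - a) ^ k / (k.factorial : ℝ)

lemma AMFam.shift {D : ℕ → ℝ → ℝ} (h : AMFam D) : AMFam (fun k => D (k + 1)) :=
  fun k x hx => h (k + 1) x hx

lemma AMFam.mono {D : ℕ → ℝ → ℝ} (h : AMFam D) (k : ℕ) : MonotoneOn (D k) (Ioi 0) := by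
  apply monotoneOn_of_deriv_nonneg (convex_Ioi 0)
  · exact fun x hx => (h k x hx).1.continuousAt.continuousWithinAt
  · intro x hx
    rw [interior_Ioi] at hx
    exact (h k x hx).1.differentiableAt.differentiableWithinAt
  · intro x hx
    rw [interior_Ioi] at hx
    rw [(h k x hx).1.deriv]
    exact (h (k + 1) x hx).2

lemma trem_hasDerivAt {D : ℕ → ℝ → ℝ} (h : AMFam D) (n : ℕ) (a x : ℝ) (hx : 0 < x) :
    HasDerivAt (trem D (n + 1) a) (trem (fun k => D (k + 1)) n a x) x := by
  unfold trem
  refine (h 0 x hx).1.sub ?_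
  have h1 : ∀ k ∈ Finset.range (n + 1), HasDerivAt
      (fun y : ℝ => D k a * (y - a) ^ k / (k.factorial : ℝ))
      (D k a * ((k : ℝ) * (x - a) ^ (k - 1) * 1) / (k.factorial : ℝ)) x := by
    intro k _
    exact ((((hasDerivAt_id x).sub_const a).pow k).const_mul (D k a)).div_const _
  convert HasDerivAt.fun_sum h1 using 1
  rw [Finset.sum_range_succ']
  simp only [Nat.cast_zero, zero_mul, mul_zero, zero_div, add_zero]
  apply Finset.sum_congr rfl
  intro k _
  have : ((k + 1).factorial : ℝ) = (k + 1) * k.factorial := by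
    rw [Nat.factorial_succ]; push_cast; ring
  rw [this]
  have h2 : (k.factorial : ℝ) ≠ 0 := by positivity
  have h3 : (k : ℝ) + 1 ≠ 0 := by positivity
  simp only [Nat.add_sub_cancel]
  push_cast
  field_simp

lemma trem_self {D : ℕ → ℝ → ℝ} (n : ℕ) (a : ℝ) : trem D (n + 1) a a = 0 := by
  unfold trem
  rw [Finset.sum_range_succ']
  simp

lemma nonneg_of_deriv_nonneg_aux {f f' : ℝ → ℝ} (h : ∀ x, 0 ≤ x → HasDerivAt f (f' x) x)
    (h0 : f 0 = 0) (h1 : ∀ x, 0 ≤ x → 0 ≤ f' x) (x : ℝ) (hx : 0 ≤ x) : 0 ≤ f x := by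
  have : MonotoneOn f (Ici 0) := by
    apply monotoneOn_of_deriv_nonneg (convex_Ici 0)
    · exact fun x hx => (h x hx).continuousAt.continuousWithinAt
    · intro x hx
      exact (h x (interior_subset hx)).differentiableAt.differentiableWithinAt
    · intro x hx
      rw [(h x (interior_subset hx)).deriv]
      exact h1 x (interior_subset hx)
  rw [← h0]
  exact this (by simp) hx hx

lemma trem_bounds (n : ℕ) : ∀ {D : ℕ → ℝ → ℝ}, AMFam D → ∀ a t : ℝ, 0 < a → 0 ≤ t → t ≤ 1 →
    ∀ L : ℝ, 0 ≤ L → 0 ≤ trem D n a (a + L) ∧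
      trem D n a (a + t * L) ≤ t ^ n * trem D n a (a + L) := by
  induction n with
  | zero =>
    intro D h a t ha ht0 ht1 L hL
    simp only [trem, Finset.range_zero, Finset.sum_empty, sub_zero, pow_zero, one_mul]
    have : 0 ≤ t * L := by positivity
    exact ⟨(h 0 _ (by positivity)).2, h.mono 0 (show (0:ℝ) < _ by positivity)
      (show (0:ℝ) < _ by positivity) (by nlinarith)⟩
  | succ n ih =>
    intro D h a t ha ht0 ht1 L hL
    constructor
    · apply nonneg_of_deriv_nonneg_aux (f := fun L => trem D (n + 1) a (a + L))
        (f' := fun L => trem (fun k => D (k + 1)) n a (a + L))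
      · intro x hx
        exact (trem_hasDerivAt h n a (a + x) (by positivity)).comp_const_add a x
      · simpa using trem_self n a
      · intro x hx
        exact (ih h.shift a t ha ht0 ht1 x hx).1
      · exact hL
    · rw [← sub_nonneg]
      apply nonneg_of_deriv_nonneg_aux
        (f := fun L => t ^ (n + 1) * trem D (n + 1) a (a + L) - trem D (n + 1) a (a + t * L))
        (f' := fun L => t ^ (n + 1) * trem (fun k => D (k + 1)) n a (a + L)
          - trem (fun k => D (k + 1)) n a (a + t * L) * (t * 1))
      · intro x hx
        refine HasDerivAt.sub (((trem_hasDerivAt h n a (a + x)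
          (by positivity)).comp_const_add a x).const_mul _) ?_
        have h2 : HasDerivAt (fun y : ℝ => a + t * y) (t * 1) x :=
          ((hasDerivAt_id x).const_mul t).const_add a
        exact (trem_hasDerivAt h n a (a + t * x) (by positivity)).comp x h2
      · simp [trem_self n a]
      · intro x hx
        have := (ih h.shift a t ha ht0 ht1 x hx).2
        have := mul_le_mul_of_nonneg_left this ht0
        rw [pow_succ]
        nlinarith
      · exact hL

/-- Bernstein's theorem. -/
lemma AMFam.hasSum {D : ℕ → ℝ → ℝ} (h : AMFam D) :
    ∃ c : ℕ → ℝ, (∀ n, 0 ≤ c n) ∧ ∀ x : ℝ, 0 < x → HasSum (fun n => c n * x ^ n) (D 0 x) := by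
  have hb : ∀ k, ∃ l, 0 ≤ l ∧ Tendsto (D k) (nhdsWithin 0 (Ioi 0)) (nhds l) := by
    intro k
    have hbd : BddBelow (D k '' Ioi 0) := by
      refine ⟨0, ?_⟩
      rintro _ ⟨x, hx, rfl⟩
      exact (h k x hx).2
    refine ⟨_, ?_, (h.mono k).tendsto_nhdsGT hbd⟩
    apply Real.sInf_nonneg
    rintro _ ⟨x, hx, rfl⟩
    exact (h k x hx).2
  choose l hl0 hl using hb
  refine ⟨fun n => l n / n.factorial, fun n => div_nonneg (hl0 n) (by positivity), ?_⟩
  intro x hx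
  have hxx : ∀ᶠ a in nhdsWithin (0:ℝ) (Ioi 0), 0 < a ∧ a < x := by
    have := Ioo_mem_nhdsGT hx
    filter_upwards [this] with a ha using ⟨ha.1, ha.2⟩
  have hlim : ∀ n, Tendsto (fun a => trem D n a x) (nhdsWithin (0:ℝ) (Ioi 0))
      (nhds (D 0 x - ∑ k ∈ Finset.range n, l k / k.factorial * x ^ k)) := by
    intro n
    unfold trem
    refine tendsto_const_nhds.sub (tendsto_finsetSum _ fun k _ => ?_)
    have h1 : Tendsto (fun a : ℝ => (x - a) ^ k) (nhdsWithin (0:ℝ) (Ioi 0)) (nhds (x ^ k)) := by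
      have : Continuous (fun a : ℝ => (x - a) ^ k) := by fun_prop
      have := (this.tendsto 0).mono_left (nhdsWithin_le_nhds (s := Ioi 0))
      simpa using this
    have := ((hl k).mul h1).div_const (k.factorial : ℝ)
    convert this using 2
    ring
  have hlow : ∀ n, 0 ≤ D 0 x - ∑ k ∈ Finset.range n, l k / k.factorial * x ^ k := by
    intro n
    refine ge_of_tendsto (hlim n) ?_
    filter_upwards [hxx] with a ha
    have := (trem_bounds n h a 0 ha.1 le_rfl zero_le_one (x - a) (by linarith)).1
    simpa using this
  have hup : ∀ n, D 0 x - ∑ k ∈ Finset.range n, l k / k.factorial * x ^ k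
      ≤ (1 / 2) ^ n * D 0 (2 * x) := by
    intro n
    refine le_of_tendsto (hlim n) ?_
    filter_upwards [hxx] with a ha
    have h1 := (trem_bounds n h a (1/2) ha.1 (by norm_num) (by norm_num) (2 * (x - a))
      (by linarith)).2
    have e1 : a + 1 / 2 * (2 * (x - a)) = x := by ring
    have e2 : a + 2 * (x - a) = 2 * x - a := by ring
    rw [e1, e2] at h1
    refine h1.trans (mul_le_mul_of_nonneg_left ?_ (by positivity))
    have h2 : trem D n a (2 * x - a) ≤ D 0 (2 * x - a) := by
      unfold trem
      have : 0 ≤ ∑ k ∈ Finset.range n, D k a * (2 * x - a - a) ^ k / (k.factorial : ℝ) := by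
        apply Finset.sum_nonneg
        intro k _
        have := (h k a ha.1).2
        have : 0 ≤ 2 * x - a - a := by linarith
        positivity
      linarith
    exact h2.trans (h.mono 0 (show (0:ℝ) < _ by linarith) (show (0:ℝ) < _ by linarith)
      (by linarith))
  rw [hasSum_iff_tendsto_nat_of_nonneg]
  · have h0 : Tendsto (fun n : ℕ => (1 / 2 : ℝ) ^ n * D 0 (2 * x)) atTop (nhds 0) := by
      have := (tendsto_pow_atTop_nhds_zero_of_lt_one (r := (1/2:ℝ)) (by norm_num)
        (by norm_num)).mul_const (D 0 (2 * x))
      simpa using this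
    have h1 := squeeze_zero hlow hup h0
    have := (tendsto_const_nhds (x := D 0 x)).sub h1
    simpa using this
  · intro n
    exact mul_nonneg (div_nonneg (hl0 n) (by positivity)) (by positivity)

lemma AMFam.of_contDiffOn {F : ℝ → ℝ} (hF : ContDiffOn ℝ (⊤ : ℕ∞) F (Set.Ioi 0))
    (h : ∀ k : ℕ, ∀ x ∈ Set.Ioi (0 : ℝ), 0 ≤ iteratedDerivWithin k F (Set.Ioi 0) x) :
    AMFam (fun k => iteratedDerivWithin k F (Set.Ioi 0)) := by
  intro k x hx
  refine ⟨?_, h k x hx⟩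
  have h1 := hF.differentiableOn_iteratedDerivWithin (m := k)
    (by exact_mod_cast ENat.natCast_lt_top k) (uniqueDiffOn_Ioi 0)
  have h2 := (h1 x hx).hasDerivWithinAt
  rw [← iteratedDerivWithin_succ] at h2
  exact h2.hasDerivAt (Ioi_mem_nhds hx)

/-- power series facts -/
lemma AME.of_pos {g : ℝ → ℝ} {c : ℕ → ℝ} (hc : ∀ n, 0 ≤ c n)
    (h : ∀ x : ℝ, 0 < x → HasSum (fun n => c n * x ^ n) (g x)) :
    ∀ x : ℝ, Summable (fun n => c n * x ^ n) := by
  intro x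
  refine Summable.of_norm_bounded (h (|x| + 1) (by positivity)).summable ?_
  intro n
  rw [norm_mul, norm_pow, Real.norm_of_nonneg (hc n), Real.norm_eq_abs]
  gcongr
  · exact hc n
  · linarith

lemma AME.deriv {g : ℝ → ℝ} (hg : AbsolutelyMonotonicEntire g) :
    ∃ g', AbsolutelyMonotonicEntire g' ∧ ∀ x, HasDerivAt g (g' x) x := by
  obtain ⟨c, hc, h⟩ := hg
  have hs : ∀ R : ℝ, 0 < R → Summable (fun n : ℕ => c n * (n * R ^ (n - 1))) := by
    intro R hR
    have h1 := ((h (2 * R)).summable).mul_left R⁻¹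
    refine Summable.of_nonneg_of_le ?_ ?_ h1
    · intro n; have := hc n; positivity
    · intro n
      rcases n with _ | n
      · simp; exact mul_nonneg (by positivity) (hc 0)
      · have : ((n + 1 : ℕ) : ℝ) ≤ 2 ^ (n + 1) := by
          exact_mod_cast (Nat.lt_two_pow_self (n := n + 1)).le
        have e : R⁻¹ * (c (n + 1) * (2 * R) ^ (n + 1)) = c (n + 1) * (2 ^ (n + 1) * R ^ n) := by
          rw [mul_pow, pow_succ R n]; field_simp
        rw [e, Nat.add_sub_cancel]
        gcongr
        exact hc _
  have hbd : ∀ (R : ℝ) (n : ℕ) (y : ℝ), |y| ≤ R →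
      ‖c n * (n * y ^ (n - 1))‖ ≤ c n * (n * R ^ (n - 1)) := by
    intro R n y hy
    rw [norm_mul, norm_mul, norm_pow, Real.norm_of_nonneg (hc n), Real.norm_eq_abs, Real.norm_eq_abs]
    rw [abs_of_nonneg (by positivity : (0:ℝ) ≤ n)]
    have := hc n
    gcongr
  have hsum : ∀ x : ℝ, Summable (fun n : ℕ => c n * (n * x ^ (n - 1))) := fun x =>
    Summable.of_norm_bounded (hs (|x| + 1) (by positivity)) (fun n => hbd _ n x (by linarith))
  refine ⟨fun x => ∑' n : ℕ, c n * (n * x ^ (n - 1)), ⟨fun n => c (n + 1) * (n + 1),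
    fun n => mul_nonneg (hc _) (by positivity), ?_⟩, ?_⟩
  · intro x
    have := (hasSum_nat_add_iff' 1).2 (hsum x).hasSum
    simp only [Finset.range_one, Finset.sum_singleton, Nat.cast_zero, zero_mul, mul_zero,
      sub_zero] at this
    have e : (fun n : ℕ => c (n + 1) * (n + 1 : ℝ) * x ^ n) =
        fun n => c (n + 1) * (((n + 1 : ℕ) : ℝ) * x ^ (n + 1 - 1)) := by
      ext n
      push_cast
      ring
    rw [e]
    exact this
  · intro x
    have e : g = fun z => ∑' n, c n * z ^ n := by
      ext z; exact (h z).tsum_eq.symm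
    rw [e]
    refine hasDerivAt_tsum_of_isPreconnected (hs (|x| + 1) (by positivity))
      (Metric.isOpen_ball (x := (0:ℝ)) (ε := |x| + 1)) (convex_ball _ _).isPreconnected
      (g := fun n z => c n * z ^ n) (g' := fun n z => c n * (n * z ^ (n - 1))) (y₀ := 0)
      ?_ ?_ (by simp; positivity) (h 0).summable (by simp)
    · intro n y _
      exact (hasDerivAt_pow n y).const_mul _
    · intro n y hy
      refine hbd _ n y ?_
      simp at hy; exact hy.le

lemma AME.nonneg {g : ℝ → ℝ} (hg : AbsolutelyMonotonicEntire g) {x : ℝ} (hx : 0 ≤ x) :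
    0 ≤ g x := by
  obtain ⟨c, hc, h⟩ := hg
  exact (h x).nonneg fun n => mul_nonneg (hc n) (by positivity)

lemma AME.continuous {g : ℝ → ℝ} (hg : AbsolutelyMonotonicEntire g) : Continuous g := by
  obtain ⟨g', _, h⟩ := AME.deriv hg
  exact continuous_iff_continuousAt.2 fun x => (h x).continuousAt

lemma AME.contDiff_nat (n : ℕ) : ∀ {g : ℝ → ℝ}, AbsolutelyMonotonicEntire g → ContDiff ℝ n g := by
  induction n with
  | zero => intro g hg; exact contDiff_zero.2 (AME.continuous hg)
  | succ n ih =>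
    intro g hg
    obtain ⟨g', hg', h⟩ := AME.deriv hg
    push_cast
    rw [contDiff_succ_iff_deriv]
    refine ⟨fun x => (h x).differentiableAt, by simp, ?_⟩
    have : _root_.deriv g = g' := by ext x; exact (h x).deriv
    rw [this]; exact ih hg'

lemma AME.iteratedDeriv_nonneg (n : ℕ) : ∀ {g : ℝ → ℝ}, AbsolutelyMonotonicEntire g →
    ∀ x, 0 ≤ x → 0 ≤ iteratedDeriv n g x := by
  induction n with
  | zero => intro g hg x hx; simpa using AME.nonneg hg hx
  | succ n ih =>
    intro g hg x hx
    obtain ⟨g', hg', h⟩ := AME.deriv hg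
    have : _root_.deriv g = g' := by ext x; exact (h x).deriv
    rw [iteratedDeriv_succ', this]
    exact ih hg' x hx

/-- sign lemma -/
lemma neg_of_first_neg (n : ℕ) : ∀ {H : ℕ → ℝ → ℝ}, (∀ k x, HasDerivAt (H k) (H (k + 1) x) x) →
    (∀ j < n, H j 0 = 0) → H n 0 < 0 → ∃ e > 0, ∀ x ∈ Ioo (0:ℝ) e, H 0 x < 0 := by
  induction n with
  | zero =>
    intro H hd _ hn
    have := (hd 0 0).continuousAt.eventually_lt continuousAt_const hn
    obtain ⟨e, he, h⟩ := Metric.eventually_nhds_iff.1 this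
    refine ⟨e, he, fun x hx => h ?_⟩
    rw [Real.dist_eq, sub_zero, abs_of_pos hx.1]; exact hx.2
  | succ n ih =>
    intro H hd h0 hn
    obtain ⟨e, he, h⟩ := ih (H := fun k => H (k + 1)) (fun k x => hd (k + 1) x)
      (fun j hj => h0 (j + 1) (by omega)) hn
    refine ⟨e, he, fun x hx => ?_⟩
    have : StrictAntiOn (H 0) (Icc 0 x) := by
      apply strictAntiOn_of_deriv_neg (convex_Icc 0 x)
      · exact fun y _ => (hd 0 y).continuousAt.continuousWithinAt
      · intro y hy
        rw [interior_Icc] at hy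
        rw [(hd 0 y).deriv]
        exact h y ⟨hy.1, hy.2.trans hx.2⟩
    have := this (left_mem_Icc.2 hx.1.le) (right_mem_Icc.2 hx.1.le) hx.1
    rwa [h0 0 (by omega)] at this

lemma mem_momentSet_iff (s : ℕ → ℝ) : s ∈ momentSet (Icc (0:ℝ) 1) ↔
    ∃ μ : Measure ℝ, IsFiniteMeasure μ ∧ (∀ᵐ x ∂μ, x ∈ Icc (0:ℝ) 1) ∧ ∀ k, s k = ∫ x, x ^ k ∂μ := by
  constructor
  · rintro ⟨μ, h1, h2, h3⟩
    refine ⟨μ, ?_, h2, h3⟩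
    have := h1 0
    simp only [pow_zero] at this
    exact (integrable_const_iff_isFiniteMeasure one_ne_zero).1 this
  · rintro ⟨μ, h1, h2, h3⟩
    refine ⟨μ, ?_, h2, h3⟩
    intro k
    refine Integrable.of_mem_Icc 0 1 (by fun_prop) ?_
    filter_upwards [h2] with x hx
    exact ⟨pow_nonneg hx.1 k, pow_le_one₀ hx.1 hx.2⟩

lemma integrable_pow_aux {μ : Measure ℝ} [IsFiniteMeasure μ] (h : ∀ᵐ x ∂μ, x ∈ Icc (0:ℝ) 1)
    (k : ℕ) : Integrable (fun x : ℝ => x ^ k) μ := by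
  refine Integrable.of_mem_Icc 0 1 (by fun_prop) ?_
  filter_upwards [h] with x hx
  exact ⟨pow_nonneg hx.1 k, pow_le_one₀ hx.1 hx.2⟩

lemma momentSet_poly {s : ℕ → ℝ} (hs : s ∈ momentSet (Icc (0:ℝ) 1)) (p : Polynomial ℝ)
    (hp : ∀ x ∈ Icc (0:ℝ) 1, 0 ≤ p.eval x) :
    0 ≤ ∑ k ∈ Finset.range (p.natDegree + 1), p.coeff k * s k := by
  obtain ⟨μ, h1, h2, h3⟩ := (mem_momentSet_iff s).1 hs
  have e : ∑ k ∈ Finset.range (p.natDegree + 1), p.coeff k * s k = ∫ x, p.eval x ∂μ := by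
    simp_rw [Polynomial.eval_eq_sum_range]
    rw [integral_finsetSum _ (fun k _ => (integrable_pow_aux h2 k).const_mul _)]
    simp_rw [integral_const_mul, h3]
  rw [e]
  apply integral_nonneg_of_ae
  filter_upwards [h2] with x hx using hp x hx

lemma momentSet_nonneg {s : ℕ → ℝ} (hs : s ∈ momentSet (Icc (0:ℝ) 1)) (k : ℕ) : 0 ≤ s k := by
  obtain ⟨μ, h1, h2, h3⟩ := (mem_momentSet_iff s).1 hs
  rw [h3]
  apply integral_nonneg_of_ae
  filter_upwards [h2] with x hx using pow_nonneg hx.1 k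

lemma momentSet_anti {s : ℕ → ℝ} (hs : s ∈ momentSet (Icc (0:ℝ) 1)) : s 1 ≤ s 0 := by
  obtain ⟨μ, h1, h2, h3⟩ := (mem_momentSet_iff s).1 hs
  rw [h3, h3]
  apply integral_mono_ae (integrable_pow_aux h2 1) (integrable_pow_aux h2 0)
  filter_upwards [h2] with x hx
  simpa using hx.2

lemma momentSet_zero {s : ℕ → ℝ} (hs : s ∈ momentSet (Icc (0:ℝ) 1)) {k : ℕ} (hk : s k = 0) :
    ∀ j, 1 ≤ j → s j = 0 := by
  obtain ⟨μ, h1, h2, h3⟩ := (mem_momentSet_iff s).1 hs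
  intro j hj
  rw [h3] at hk ⊢
  have h0 := (integral_eq_zero_iff_of_nonneg_ae (by
    filter_upwards [h2] with x hx using pow_nonneg hx.1 k) (integrable_pow_aux h2 k)).1 hk
  apply integral_eq_zero_of_ae
  filter_upwards [h0] with x hx
  have : x = 0 := eq_zero_of_pow_eq_zero hx
  subst this
  simp; omega

lemma momentSet_two (a b u : ℝ) (ha : 0 ≤ a) (hb : 0 ≤ b) (hu : u ∈ Icc (0:ℝ) 1) :
    (fun k : ℕ => a + b * u ^ k) ∈ momentSet (Icc (0:ℝ) 1) := by
  rw [mem_momentSet_iff]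
  refine ⟨ENNReal.ofReal a • Measure.dirac 1 + ENNReal.ofReal b • Measure.dirac u, ?_, ?_, ?_⟩
  · have := (Measure.dirac (1:ℝ)).smul_finite (c := ENNReal.ofReal a) ENNReal.ofReal_ne_top
    have := (Measure.dirac (u:ℝ)).smul_finite (c := ENNReal.ofReal b) ENNReal.ofReal_ne_top
    infer_instance
  · rw [ae_add_measure_iff]
    constructor
    · apply Measure.ae_smul_measure
      refine (ae_dirac_iff (p := fun x => x ∈ Icc (0:ℝ) 1) measurableSet_Icc).2 ?_; simp
    · apply Measure.ae_smul_measure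
      exact (ae_dirac_iff (p := fun x => x ∈ Icc (0:ℝ) 1) measurableSet_Icc).2 hu
  · intro k
    rw [integral_add_measure, integral_smul_measure, integral_smul_measure]
    · simp [ENNReal.toReal_ofReal, ha, hb]
    · exact (integrable_dirac (by simp)).smul_measure (by simp)
    · exact (integrable_dirac (by simp)).smul_measure (by simp)

lemma momentSet_mul {s t : ℕ → ℝ} (hs : s ∈ momentSet (Icc (0:ℝ) 1))
    (ht : t ∈ momentSet (Icc (0:ℝ) 1)) : (fun k => s k * t k) ∈ momentSet (Icc (0:ℝ) 1) := by
  obtain ⟨μ, h1, h2, h3⟩ := (mem_momentSet_iff s).1 hs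
  obtain ⟨ν, g1, g2, g3⟩ := (mem_momentSet_iff t).1 ht
  rw [mem_momentSet_iff]
  have hm : Measurable (fun z : ℝ × ℝ => z.1 * z.2) := by fun_prop
  refine ⟨(μ.prod ν).map (fun z => z.1 * z.2), inferInstance, ?_, ?_⟩
  · refine (ae_map_iff (p := fun x => x ∈ Icc (0:ℝ) 1) hm.aemeasurable measurableSet_Icc).2 ?_
    have e1 : ∀ᵐ z ∂(μ.prod ν), z.1 ∈ Icc (0:ℝ) 1 := Measure.quasiMeasurePreserving_fst.ae h2
    have e2 : ∀ᵐ z ∂(μ.prod ν), z.2 ∈ Icc (0:ℝ) 1 := Measure.quasiMeasurePreserving_snd.ae g2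
    filter_upwards [e1, e2] with z hz1 hz2
    exact ⟨mul_nonneg hz1.1 hz2.1, mul_le_one₀ hz1.2 hz2.1 hz2.2⟩
  · intro k
    rw [integral_map hm.aemeasurable (by fun_prop)]
    simp_rw [mul_pow]
    rw [integral_prod_mul (fun x : ℝ => x ^ k) (fun x : ℝ => x ^ k), h3, g3]

lemma momentSet_pow {s : ℕ → ℝ} (hs : s ∈ momentSet (Icc (0:ℝ) 1)) (n : ℕ) :
    (fun k => s k ^ n) ∈ momentSet (Icc (0:ℝ) 1) := by
  induction n with
  | zero =>
    have := momentSet_two 1 0 0 (by norm_num) le_rfl (by simp)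
    simpa using this
  | succ n ih =>
    have := momentSet_mul ih hs
    simpa only [pow_succ] using this

lemma momentSet_series {s : ℕ → ℝ} (hs : s ∈ momentSet (Icc (0:ℝ) 1)) {g : ℝ → ℝ} {c : ℕ → ℝ}
    (hc : ∀ n, 0 ≤ c n) (h : ∀ x : ℝ, HasSum (fun n => c n * x ^ n) (g x)) :
    (fun k => g (s k)) ∈ momentSet (Icc (0:ℝ) 1) := by
  have := fun n => (mem_momentSet_iff _).1 (momentSet_pow hs n)
  choose μ h1 h2 h3 using this
  rw [mem_momentSet_iff]
  set M : Measure ℝ := Measure.sum (fun n => ENNReal.ofReal (c n) • μ n) with hM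
  have hfin : IsFiniteMeasure M := by
    constructor
    rw [hM, Measure.sum_apply _ MeasurableSet.univ]
    have e : ∀ n, (ENNReal.ofReal (c n) • μ n) univ = ENNReal.ofReal (c n * s 0 ^ n) := by
      intro n
      rw [h3 n 0, ENNReal.ofReal_mul (hc n)]
      simp
    simp_rw [e]
    rw [← ENNReal.ofReal_tsum_of_nonneg]
    · exact ENNReal.ofReal_lt_top
    · intro n
      exact mul_nonneg (hc n) (pow_nonneg (momentSet_nonneg hs 0) n)
    · exact (h (s 0)).summable
  have hae : ∀ᵐ x ∂M, x ∈ Icc (0:ℝ) 1 := by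
    rw [hM, Measure.ae_sum_iff]
    exact fun n => Measure.ae_smul_measure (h2 n) _
  refine ⟨M, hfin, hae, fun k => ?_⟩
  have := hasSum_integral_measure (integrable_pow_aux hae k)
  refine (h (s k)).unique ?_
  have e : (fun n => ∫ x : ℝ, x ^ k ∂(ENNReal.ofReal (c n) • μ n)) = fun n => c n * s k ^ n := by
    ext n
    rw [integral_smul_measure, ENNReal.toReal_ofReal (hc n), ← h3 n k, smul_eq_mul]
  rw [e] at this
  exact this

lemma backward_s1 (F : ℝ → ℝ) (h1 : ContDiffOn ℝ (⊤ : ℕ∞) F (Set.Ioi 0))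
    (h2 : ∀ k : ℕ, ∀ x ∈ Set.Ioi (0 : ℝ), 0 ≤ iteratedDerivWithin k F (Set.Ioi 0) x)
    (h3 : 0 ≤ F 0) (L : ℝ) (hL : Tendsto F (nhdsWithin 0 (Set.Ioi 0)) (nhds L)) (h4 : F 0 ≤ L)
    (s : ℕ → ℝ) (hs : s ∈ momentSet (Set.Icc (0 : ℝ) 1)) :
    (fun k => F (s k)) ∈ momentSet (Set.Icc (0 : ℝ) 1) := by
  obtain ⟨c, hc, h⟩ := (AMFam.of_contDiffOn h1 h2).hasSum
  simp only [iteratedDerivWithin_zero] at h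
  by_cases hz : ∃ k, s k = 0
  · obtain ⟨k, hk⟩ := hz
    have hj := momentSet_zero hs hk
    have hmono := (AMFam.of_contDiffOn h1 h2).mono 0
    simp only [iteratedDerivWithin_zero] at hmono
    have h5 : F 0 ≤ F (s 0) := by
      rcases (momentSet_nonneg hs 0).eq_or_lt with h0 | h0
      · rw [← h0]
      · refine h4.trans (le_of_tendsto hL ?_)
        filter_upwards [Ioo_mem_nhdsGT h0] with y hy
        exact hmono hy.1 h0 hy.2.le
    have := momentSet_two (F 0) (F (s 0) - F 0) 0 h3 (by linarith) (by simp)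
    convert this using 2 with j
    rcases j with _ | j
    · simp
    · simp [hj]
  · push Not at hz
    have hsum := AME.of_pos hc h
    have := momentSet_series hs hc (fun x => (hsum x).hasSum)
    convert this using 2 with k
    exact (h _ (lt_of_le_of_ne (momentSet_nonneg hs k) (hz k).symm)).tsum_eq.symm

/-! forward direction -/

lemma positivity_deriv {G : ℝ → ℝ} (hG : ContDiff ℝ (⊤ : ℕ∞) G)
    (h : ∀ a e : ℝ, 0 ≤ a → 0 ≤ e → ∀ p : Polynomial ℝ, (∀ x ∈ Icc (0:ℝ) 1, 0 ≤ p.eval x) →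
      0 ≤ ∑ k ∈ Finset.range (p.natDegree + 1), p.coeff k * G (a + e * (1/2) ^ k))
    (n : ℕ) (a : ℝ) (ha : 0 ≤ a) : 0 ≤ iteratedDeriv n G a := by
  set p : Polynomial ℝ := ∏ j ∈ Finset.range n, (Polynomial.X - Polynomial.C ((1/2 : ℝ) ^ j)) ^ 2
    with hp
  have hpe : ∀ x, p.eval x = ∏ j ∈ Finset.range n, (x - (1/2 : ℝ) ^ j) ^ 2 := by
    intro x; rw [hp, Polynomial.eval_prod]; simp
  have hD : ∀ k x, HasDerivAt (iteratedDeriv k G) (iteratedDeriv (k + 1) G x) x := by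
    intro k x
    rw [iteratedDeriv_succ]
    exact (hG.differentiable_iteratedDeriv k (by exact_mod_cast ENat.natCast_lt_top k) x).hasDerivAt
  by_contra hneg
  push Not at hneg
  set H : ℕ → ℝ → ℝ := fun j e => ∑ k ∈ Finset.range (p.natDegree + 1),
    p.coeff k * (((1/2 : ℝ) ^ k) ^ j * iteratedDeriv j G (a + e * (1/2) ^ k)) with hH
  have hH0 : ∀ j, H j 0 = p.eval ((1/2 : ℝ) ^ j) * iteratedDeriv j G a := by
    intro j
    simp only [hH, Polynomial.eval_eq_sum_range, Finset.sum_mul]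
    apply Finset.sum_congr rfl
    intro k _
    rw [← pow_mul, ← pow_mul, mul_comm k j]
    simp; ring
  have hder : ∀ k x, HasDerivAt (H k) (H (k + 1) x) x := by
    intro j x
    simp only [hH]
    apply HasDerivAt.fun_sum
    intro k _
    apply HasDerivAt.const_mul
    have h2 : HasDerivAt (fun y : ℝ => a + y * (1/2) ^ k) (1 * (1/2) ^ k) x :=
      ((hasDerivAt_id x).mul_const _).const_add a
    have h3 := ((hD j (a + x * (1/2) ^ k)).comp x h2).const_mul (((1/2 : ℝ) ^ k) ^ j)
    have e : ((1/2 : ℝ) ^ k) ^ (j + 1) * iteratedDeriv (j + 1) G (a + x * (1 / 2) ^ k) =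
      ((1/2 : ℝ) ^ k) ^ j * (iteratedDeriv (j + 1) G (a + x * (1 / 2) ^ k) * (1 * (1 / 2) ^ k)) := by
      rw [pow_succ ((1/2 : ℝ) ^ k) j]; ring
    rw [e]
    exact h3
  obtain ⟨e, he, hlt⟩ := neg_of_first_neg n hder (by
    intro j hj
    rw [hH0, hpe, Finset.prod_eq_zero (Finset.mem_range.2 hj) (by simp), zero_mul]) (by
    rw [hH0, hpe]
    refine mul_neg_of_pos_of_neg (Finset.prod_pos ?_) hneg
    intro j hj
    have hj := Finset.mem_range.1 hj
    have : (1/2 : ℝ) ^ n < (1/2) ^ j := pow_lt_pow_right_of_lt_one₀ (by norm_num) (by norm_num) hj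
    have : (1/2 : ℝ) ^ n - (1/2) ^ j ≠ 0 := by linarith
    positivity)
  have h1 := hlt (e / 2) ⟨by positivity, by linarith⟩
  have h2 := h a (e / 2) ha (by positivity) p (by
    intro x _; rw [hpe]; exact Finset.prod_nonneg fun j _ => sq_nonneg _)
  simp only [hH, pow_zero, one_mul, iteratedDeriv_zero] at h1
  linarith

lemma mollify_s1 {F : ℝ → ℝ} (hF : Monotone F)
    (h : ∀ a e : ℝ, 0 ≤ a → 0 ≤ e → ∀ p : Polynomial ℝ, (∀ x ∈ Icc (0:ℝ) 1, 0 ≤ p.eval x) →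
      0 ≤ ∑ k ∈ Finset.range (p.natDegree + 1), p.coeff k * F (a + e * (1/2) ^ k))
    (d : ℝ) (hd : 0 < d) : ∃ c : ℕ → ℝ, ∃ G : ℝ → ℝ, (∀ n, 0 ≤ c n) ∧
      (∀ x, 0 < x → HasSum (fun n => c n * x ^ n) (G x)) ∧
      ∀ x, F x ≤ G x ∧ G x ≤ F (x + 2 * d) := by
  let b : ContDiffBump (0:ℝ) := ⟨d / 2, d, by positivity, by linarith⟩
  set φ : ℝ → ℝ := b.normed volume with hφ
  have hφ0 : ∀ t, 0 ≤ φ t := fun t => b.nonneg_normed t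
  have hφ1 : ∫ t, φ t = 1 := b.integral_normed
  have hφc : HasCompactSupport φ := b.hasCompactSupport_normed
  have hφs : ContDiff ℝ (⊤ : ℕ∞) φ := b.contDiff_normed
  have hφd : ∀ t, φ t ≠ 0 → -d < t ∧ t < d := by
    intro t ht
    have : t ∈ Function.support φ := ht
    rw [hφ, b.support_normed_eq] at this
    simpa [abs_lt] using this
  have hFl : LocallyIntegrable F volume := hF.locallyIntegrable
  have hint : ∀ y, Integrable (fun t => φ t * F (y - t)) := by
    intro y
    have := hφc.convolutionExists_left (ContinuousLinearMap.lsmul ℝ ℝ) hφs.continuous hFl y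
    simpa [ConvolutionExistsAt] using this
  have hφi : Integrable φ := hφs.continuous.integrable_of_hasCompactSupport hφc
  set G : ℝ → ℝ := fun x => ∫ t, φ t * F (x + d - t) with hGdef
  have hG : ContDiff ℝ (⊤ : ℕ∞) G := by
    have h1 := hφc.contDiff_convolution_left (ContinuousLinearMap.lsmul ℝ ℝ) hφs hFl
    have h2 : ContDiff ℝ (⊤ : ℕ∞) (fun x : ℝ => x + d) := by fun_prop
    exact h1.comp h2
  have hpos : ∀ a e : ℝ, 0 ≤ a → 0 ≤ e → ∀ p : Polynomial ℝ,
      (∀ x ∈ Icc (0:ℝ) 1, 0 ≤ p.eval x) →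
      0 ≤ ∑ k ∈ Finset.range (p.natDegree + 1), p.coeff k * G (a + e * (1/2) ^ k) := by
    intro a e ha he p hp
    simp only [hGdef]
    simp_rw [← integral_const_mul]
    rw [← integral_finsetSum _ (fun k _ => (hint _).const_mul _)]
    apply integral_nonneg
    intro t
    simp only [Pi.zero_apply]
    by_cases ht : φ t = 0
    · simp [ht]
    · have := h (a + (d - t)) e (by linarith [(hφd t ht).2]) he p hp
      have := mul_nonneg (hφ0 t) this
      rw [Finset.mul_sum] at this
      convert this using 2 with k hk
      rw [show a + e * (1/2) ^ k + d - t = a + (d - t) + e * (1/2) ^ k by ring]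
      ring
  have hfam : AMFam (fun k => iteratedDeriv k G) := by
    intro k x hx
    refine ⟨?_, positivity_deriv hG hpos k x hx.le⟩
    simp only [iteratedDeriv_succ]
    exact (hG.differentiable_iteratedDeriv k (by exact_mod_cast ENat.natCast_lt_top k) x).hasDerivAt
  obtain ⟨c, hc, hs⟩ := hfam.hasSum
  simp only [iteratedDeriv_zero] at hs
  refine ⟨c, G, hc, hs, fun x => ⟨?_, ?_⟩⟩
  · calc F x = ∫ t, φ t * F x := by rw [integral_mul_const, hφ1, one_mul]
      _ ≤ G x := by
        refine integral_mono (hφi.mul_const _) (hint _) fun t => ?_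
        by_cases ht : φ t = 0
        · simp [ht]
        · exact mul_le_mul_of_nonneg_left (hF (by linarith [(hφd t ht).2])) (hφ0 t)
  · calc G x ≤ ∫ t, φ t * F (x + 2 * d) := by
          refine integral_mono (hint _) (hφi.mul_const _) fun t => ?_
          by_cases ht : φ t = 0
          · simp [ht]
          · exact mul_le_mul_of_nonneg_left (hF (by linarith [(hφd t ht).1])) (hφ0 t)
      _ = F (x + 2 * d) := by rw [integral_mul_const, hφ1, one_mul]

lemma exists_series {F : ℝ → ℝ} (hF : Monotone F)
    (h : ∀ a e : ℝ, 0 ≤ a → 0 ≤ e → ∀ p : Polynomial ℝ, (∀ x ∈ Icc (0:ℝ) 1, 0 ≤ p.eval x) →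
      0 ≤ ∑ k ∈ Finset.range (p.natDegree + 1), p.coeff k * F (a + e * (1/2) ^ k)) :
    ∃ g : ℝ → ℝ, AbsolutelyMonotonicEntire g ∧ ∀ x, 0 < x → F x = g x := by
  have := fun m : ℕ => mollify_s1 hF h (1 / ((m : ℝ) + 1)) (by positivity)
  choose c G hc hs hb using this
  have hle : ∀ m : ℕ, (1 : ℝ) / ((m : ℝ) + 1) ≤ 1 := by
    intro m
    rw [div_le_one (by positivity)]
    linarith [(Nat.cast_nonneg m : (0:ℝ) ≤ m)]
  have hcb : ∀ m k (x : ℝ), 0 < x → c m k * x ^ k ≤ F (x + 2) := by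
    intro m k x hx
    refine (le_hasSum (hs m x hx) k fun j _ => mul_nonneg (hc m j) (by positivity)).trans ?_
    exact (hb m x).2.trans (hF (by linarith [hle m]))
  let U : Ultrafilter ℕ := hyperfilter ℕ
  have hU : (U : Filter ℕ) ≤ atTop := by
    rw [← Nat.cofinite_eq_atTop]; exact hyperfilter_le_cofinite
  have hlim : ∀ k, ∃ l, 0 ≤ l ∧ Tendsto (fun m => c m k) U (nhds l) := by
    intro k
    obtain ⟨l, hl, hl2⟩ := (isCompact_Icc (a := (0:ℝ)) (b := F (1 + 2))).ultrafilter_le_nhds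
      (U.map (fun m => c m k)) (by
        rw [le_principal_iff]
        refine Filter.mem_map.2 (Filter.univ_mem' fun m => ?_)
        exact ⟨hc m k, by simpa using hcb m k 1 one_pos⟩)
    exact ⟨l, hl.1, hl2⟩
  choose l hl0 hl using hlim
  have hbd : ∀ m k (x : ℝ), 0 < x → c m k * x ^ k ≤ F (2 * x + 2) * (1/2) ^ k := by
    intro m k x hx
    have h1 := hcb m k (2 * x) (by positivity)
    have h2 := mul_le_mul_of_nonneg_right h1 (by positivity : (0:ℝ) ≤ (1/2) ^ k)
    rwa [mul_assoc, ← mul_pow, show 2 * x * (1/2) = x by ring] at h2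
  have hgeo : ∀ x : ℝ, Summable (fun k : ℕ => F (2 * x + 2) * (1/2 : ℝ) ^ k) := fun x =>
    (summable_geometric_of_lt_one (by norm_num) (by norm_num)).mul_left _
  have hlx : ∀ (x : ℝ) (k : ℕ), Tendsto (fun m => c m k * x ^ k) U (nhds (l k * x ^ k)) :=
    fun x k => (hl k).mul_const _
  have hlsum : ∀ x : ℝ, 0 < x → Summable (fun k => l k * x ^ k) := by
    intro x hx
    refine Summable.of_nonneg_of_le (fun k => mul_nonneg (hl0 k) (by positivity)) ?_ (hgeo x)
    intro k
    exact le_of_tendsto (hlx x k) (Eventually.of_forall fun m => hbd m k x hx)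
  have hall := AME.of_pos hl0 (fun x hx => (hlsum x hx).hasSum)
  set g : ℝ → ℝ := fun x => ∑' k, l k * x ^ k with hg
  have hgA : AbsolutelyMonotonicEntire g := ⟨l, hl0, fun x => (hall x).hasSum⟩
  have hGt : ∀ x, 0 < x → Tendsto (fun m => G m x) U (nhds (g x)) := by
    intro x hx
    have := tendsto_tsum_of_dominated_convergence (𝓕 := (U : Filter ℕ)) (hgeo x) (hlx x)
      (Eventually.of_forall fun m k => by
        rw [Real.norm_of_nonneg (mul_nonneg (hc m k) (by positivity))]
        exact hbd m k x hx)
    refine this.congr fun m => (hs m x hx).tsum_eq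
  have hlow : ∀ x, 0 < x → F x ≤ g x := fun x hx =>
    ge_of_tendsto (hGt x hx) (Eventually.of_forall fun m => (hb m x).1)
  have hup : ∀ x y, 0 < x → x < y → g x ≤ F y := by
    intro x y hx hxy
    refine le_of_tendsto (hGt x hx) (hU ?_)
    have : Tendsto (fun m : ℕ => x + 2 * (1 / ((m:ℝ) + 1))) atTop (nhds (x + 2 * 0)) :=
      (tendsto_one_div_add_atTop_nhds_zero_nat.const_mul 2).const_add x
    have := this.eventually_lt_const (show x + 2 * 0 < y by simpa using hxy)
    filter_upwards [this] with m hm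
    exact (hb m x).2.trans (hF hm.le)
  refine ⟨g, hgA, fun x hx => le_antisymm (hlow x hx) ?_⟩
  have hcont := (AME.continuous hgA).tendsto x
  refine le_of_tendsto (hcont.mono_left (nhdsWithin_le_nhds (s := Iio x))) ?_
  filter_upwards [Ioo_mem_nhdsLT hx] with z hz
  exact hup z x hz.1 hz.2

lemma forward_s1 (F : ℝ → ℝ) (h : ∀ s ∈ momentSet (Set.Icc (0 : ℝ) 1),
      (fun k => F (s k)) ∈ momentSet (Set.Icc (0 : ℝ) 1)) :
    (ContDiffOn ℝ (⊤ : ℕ∞) F (Set.Ioi 0) ∧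
      (∀ k : ℕ, ∀ x ∈ Set.Ioi (0 : ℝ), 0 ≤ iteratedDerivWithin k F (Set.Ioi 0) x) ∧
      0 ≤ F 0 ∧
      ∃ L : ℝ, Tendsto F (nhdsWithin 0 (Set.Ioi 0)) (nhds L) ∧ F 0 ≤ L) := by
  have hmono : ∀ a b, 0 ≤ a → a ≤ b → F a ≤ F b := by
    intro a b ha hab
    have := momentSet_anti (h _ (momentSet_two a (b - a) 0 ha (by linarith) (by simp)))
    simpa using this
  have h0 : 0 ≤ F 0 := by
    have := momentSet_nonneg (h _ (momentSet_two 0 0 0 le_rfl le_rfl (by simp))) 0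
    simpa using this
  have hM : Monotone (fun x => F (max x 0)) := fun x y hxy =>
    hmono _ _ (le_max_right _ _) (max_le_max_right 0 hxy)
  obtain ⟨g, hg, hFg⟩ := exists_series hM (by
    intro a e ha he p hp
    have := momentSet_poly (h _ (momentSet_two a e (1/2) ha he (by constructor <;> norm_num))) p hp
    convert this using 4 with k
    exact max_eq_left (by positivity))
  have heq : EqOn F g (Ioi 0) := by
    intro x hx
    have := hFg x hx
    rwa [max_eq_left (le_of_lt hx)] at this
  refine ⟨?_, ?_, h0, g 0, ?_, ?_⟩
  · have : ContDiff ℝ (⊤ : ℕ∞) g := contDiff_infty.2 fun n => AME.contDiff_nat n hg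
    exact this.contDiffOn.congr heq
  · intro k x hx
    rw [iteratedDerivWithin_congr heq hx, iteratedDerivWithin_of_isOpen isOpen_Ioi hx]
    exact AME.iteratedDeriv_nonneg k hg x (le_of_lt hx)
  · have := ((AME.continuous hg).tendsto 0).mono_left (nhdsWithin_le_nhds (s := Ioi 0))
    exact this.congr' (heq.symm.eventuallyEq_of_mem self_mem_nhdsWithin)
  · have := ((AME.continuous hg).tendsto 0).mono_left (nhdsWithin_le_nhds (s := Ioi 0))
    refine ge_of_tendsto this ?_
    filter_upwards [self_mem_nhdsWithin] with x hx
    rw [← heq hx]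
    exact hmono 0 x le_rfl (le_of_lt hx)

/-- `F : [0,∞) → ℝ` maps `M([0,1])` into itself entrywise iff `F` is absolutely monotonic
on `(0,∞)` and `0 ≤ F 0 ≤ lim_{ε→0⁺} F ε`. -/
theorem moment_transform_Icc_zero_one (F : ℝ → ℝ) :
    (∀ s ∈ momentSet (Set.Icc (0 : ℝ) 1),
      (fun k => F (s k)) ∈ momentSet (Set.Icc (0 : ℝ) 1)) ↔
    (ContDiffOn ℝ (⊤ : ℕ∞) F (Set.Ioi 0) ∧
      (∀ k : ℕ, ∀ x ∈ Set.Ioi (0 : ℝ), 0 ≤ iteratedDerivWithin k F (Set.Ioi 0) x) ∧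
      0 ≤ F 0 ∧
      ∃ L : ℝ, Tendsto F (nhdsWithin 0 (Set.Ioi 0)) (nhds L) ∧ F 0 ≤ L) := by
  exact ⟨forward_s1 F, fun ⟨h1, h2, h3, L, hL, h4⟩ s hs => backward_s1 F h1 h2 h3 L hL h4 s hs⟩
end

section
/- Fix u₀ ∈ (0,1). For a function F : ℝ → ℝ, the following are equivalent: (1) F applied entrywise maps M({−1,−u₀}) into M((−∞,0]) and maps M₄({−1,0}) together with M₄({−u}) for every u ∈ (0,1) into M₄((−∞,0]); (2) F applied entrywise maps M([−1,0]) into itself; (3) there exists an absolutely monotonic entire function F̃ such that F(x) = F̃(x) for x > 0, F(0) = 0, and F(x) = −F̃(−x) for x < 0 (in particular F is odd, but may be discontinuous at 0). -/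
open MeasureTheory Filter Set
open scoped ENNReal

/-- `truncMomentSet n K` is the set of truncated moment sequences `(s₀(μ), …, sₙ(μ))`
of admissible measures supported in `K`. -/
def truncMomentSet (n : ℕ) (K : Set ℝ) : Set (Fin (n + 1) → ℝ) :=
  {s | ∃ μ : Measure ℝ, IsAdmissible μ ∧ μ Kᶜ = 0 ∧ ∀ k : Fin (n + 1), s k = moment μ k}

open scoped Topology Convolution ContDiff

/-- Taylor formula with Lagrange remainder. -/
theorem aux_taylor {g : ℝ → ℝ} (hg : ContDiff ℝ ∞ g) (n : ℕ) {x₀ x : ℝ} (hx : x₀ < x) :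
    ∃ ξ ∈ Set.Icc x₀ x, g x = ∑ k ∈ Finset.range n,
      ((k.factorial : ℝ)⁻¹ * (x - x₀) ^ k) * iteratedDeriv k g x₀ +
      iteratedDeriv n g ξ * (x - x₀) ^ n / n.factorial := by
  cases n with
  | zero => exact ⟨x, ⟨hx.le, le_rfl⟩, by simp⟩
  | succ n =>
    obtain ⟨ξ, hξ, h⟩ := taylor_mean_remainder_lagrange_iteratedDeriv (f := g) (n := n) hx.ne
      ((hg.of_le (by exact_mod_cast le_top)).contDiffOn)
    rw [uIoo_of_le hx.le] at hξ
    refine ⟨ξ, Ioo_subset_Icc_self hξ, ?_⟩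
    rw [← h, taylor_within_apply]
    have : ∀ k, iteratedDerivWithin k g (uIcc x₀ x) x₀ = iteratedDeriv k g x₀ := fun k =>
      iteratedDerivWithin_eq_iteratedDeriv (uniqueDiffOn_uIcc hx.ne)
        (hg.contDiffAt.of_le (by exact_mod_cast le_top)) left_mem_uIcc
    simp [this]

theorem aux_taylor_series {g : ℝ → ℝ} (hg : ContDiff ℝ ∞ g)
    (hpos : ∀ n, ∀ x, 0 ≤ x → 0 ≤ iteratedDeriv n g x) {x : ℝ} (hx : 0 ≤ x) :
    HasSum (fun n => ((n.factorial : ℝ)⁻¹ * iteratedDeriv n g 0) * x ^ n) (g x) := by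
  rcases hx.eq_or_lt with rfl | hx
  · have := hasSum_single (f := fun n : ℕ => ((n.factorial : ℝ)⁻¹ * iteratedDeriv n g 0) * 0 ^ n) 0
      (by intro b hb; simp [hb])
    simpa using this
  have hmono : ∀ n, MonotoneOn (iteratedDeriv n g) (Ici 0) := by
    intro n
    apply monotoneOn_of_deriv_nonneg (convex_Ici 0)
    · exact (hg.continuous_iteratedDeriv n (by exact_mod_cast le_top)).continuousOn
    · exact (hg.differentiable_iteratedDeriv n (by exact_mod_cast WithTop.coe_lt_top n)).differentiableOn
    · intro y hy
      rw [← iteratedDeriv_succ]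
      rw [interior_Ici] at hy
      exact hpos _ _ (le_of_lt hy)
  have key : ∀ n, |g x - ∑ k ∈ Finset.range n,
      ((k.factorial : ℝ)⁻¹ * iteratedDeriv k g 0) * x ^ k| ≤ g (3 * x) * (1 / 2) ^ n := by
    intro n
    obtain ⟨ξ, hξ, h⟩ := aux_taylor hg n hx
    obtain ⟨η, hη, h'⟩ := aux_taylor hg n (show x < 3 * x by linarith)
    have e : g x - ∑ k ∈ Finset.range n,
      ((k.factorial : ℝ)⁻¹ * iteratedDeriv k g 0) * x ^ k =
        iteratedDeriv n g ξ * x ^ n / n.factorial := by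
      rw [h, sub_zero]
      have : ∀ k, (k.factorial : ℝ)⁻¹ * x ^ k * iteratedDeriv k g 0 =
        (k.factorial : ℝ)⁻¹ * iteratedDeriv k g 0 * x ^ k := fun k => by ring
      simp [this]
    rw [e, abs_of_nonneg (by have := hpos n ξ hξ.1; positivity)]
    have h1 : iteratedDeriv n g ξ ≤ iteratedDeriv n g η :=
      hmono n hξ.1 (hx.le.trans hη.1) (hξ.2.trans hη.1)
    have h2 : 0 ≤ ∑ k ∈ Finset.range n,
      ((k.factorial : ℝ)⁻¹ * (3 * x - x) ^ k) * iteratedDeriv k g x := by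
      apply Finset.sum_nonneg
      intro k _
      have := hpos k x hx.le
      have : 0 ≤ 3 * x - x := by linarith
      positivity
    have h3 : iteratedDeriv n g ξ * (3 * x - x) ^ n / n.factorial ≤ g (3 * x) := by
      rw [h']
      have : 0 ≤ (3 * x - x) ^ n := by apply pow_nonneg; linarith
      have : iteratedDeriv n g ξ * (3 * x - x) ^ n / n.factorial ≤
        iteratedDeriv n g η * (3 * x - x) ^ n / n.factorial := by gcongr
      linarith
    calc iteratedDeriv n g ξ * x ^ n / n.factorial
        = iteratedDeriv n g ξ * (3 * x - x) ^ n / n.factorial * (1 / 2) ^ n := by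
          rw [show 3 * x - x = 2 * x by ring, mul_pow, one_div, inv_pow]
          field_simp
      _ ≤ _ := by gcongr
  rw [hasSum_iff_tendsto_nat_of_nonneg]
  · rw [tendsto_iff_norm_sub_tendsto_zero]
    refine squeeze_zero (fun _ => norm_nonneg _) (fun n => ?_)
      (g := fun n => g (3 * x) * (1 / 2) ^ n) ?_
    · rw [Real.norm_eq_abs, abs_sub_comm]; exact key n
    · simpa using (tendsto_pow_atTop_nhds_zero_of_lt_one (r := (1/2 : ℝ)) (by norm_num)
        (by norm_num)).const_mul (g (3 * x))
  · intro n
    have := hpos n 0 le_rfl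
    positivity

theorem aux_deriv_nonneg {g : ℝ → ℝ} (hg : ContDiff ℝ ∞ g) {u : ℝ} (hu0 : 0 < u) (hu1 : u < 1)
    (H : ∀ a b, 0 ≤ a → 0 ≤ b → ∀ p : Polynomial ℝ, (∀ x, 0 ≤ p.eval x) →
      0 ≤ ∑ k ∈ p.support, p.coeff k * g (a + b * u ^ k)) (n : ℕ) {a : ℝ} (ha : 0 ≤ a) :
    0 ≤ iteratedDeriv n g a := by
  set p : Polynomial ℝ := ∏ j ∈ Finset.range n, (Polynomial.X - Polynomial.C (u ^ j)) ^ 2 with hp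
  have hev : ∀ x, p.eval x = ∏ j ∈ Finset.range n, (x - u ^ j) ^ 2 := by
    intro x; simp [hp, Polynomial.eval_prod]
  have hp0 : ∀ x, 0 ≤ p.eval x := by
    intro x; rw [hev]; exact Finset.prod_nonneg fun _ _ => sq_nonneg _
  have hpn : 0 < p.eval (u ^ n) := by
    rw [hev]
    apply Finset.prod_pos
    intro j hj
    have : u ^ n < u ^ j := pow_lt_pow_right_of_lt_one₀ hu0 hu1 (Finset.mem_range.1 hj)
    exact sq_pos_of_neg (by linarith)
  have hpj : ∀ j ∈ Finset.range n, p.eval (u ^ j) = 0 := by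
    intro j hj
    rw [hev]
    exact Finset.prod_eq_zero hj (by simp)
  have hpe : ∀ x, p.eval x = ∑ k ∈ p.support, p.coeff k * x ^ k := fun x =>
    Polynomial.eval_eq_sum
  have T : ∀ (m k : ℕ), ∃ ξ ∈ Set.Icc a (a + (1 / ((m : ℝ) + 1)) * u ^ k),
      g (a + (1 / ((m : ℝ) + 1)) * u ^ k) = ∑ j ∈ Finset.range n,
      ((j.factorial : ℝ)⁻¹ * ((1 / ((m : ℝ) + 1)) * u ^ k) ^ j) * iteratedDeriv j g a +
      iteratedDeriv n g ξ * ((1 / ((m : ℝ) + 1)) * u ^ k) ^ n / n.factorial := by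
    intro m k
    have : a < a + (1 / ((m : ℝ) + 1)) * u ^ k := by
      have : 0 < (1 / ((m : ℝ) + 1)) * u ^ k := by positivity
      linarith
    simpa using aux_taylor hg n this
  choose ξ hξ hT using T
  have hξlim : ∀ k, Tendsto (fun m => ξ m k) atTop (𝓝 a) := by
    intro k
    refine tendsto_of_tendsto_of_tendsto_of_le_of_le tendsto_const_nhds
      (h := fun m : ℕ => a + (1 / ((m : ℝ) + 1)) * u ^ k) ?_ (fun m => (hξ m k).1)
      (fun m => (hξ m k).2)
    simpa using ((tendsto_one_div_add_atTop_nhds_zero_nat (𝕜 := ℝ)).mul_const (u ^ k)).const_add a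
  have hnn : ∀ m : ℕ, 0 ≤ ∑ k ∈ p.support, p.coeff k * ((u ^ n) ^ k * iteratedDeriv n g (ξ m k)) := by
    intro m
    set b : ℝ := 1 / ((m : ℝ) + 1) with hb
    have hb0 : 0 < b := by positivity
    have h1 := H a b ha hb0.le p hp0
    have e : ∑ k ∈ p.support, p.coeff k * g (a + b * u ^ k) =
        b ^ n / n.factorial *
          ∑ k ∈ p.support, p.coeff k * ((u ^ n) ^ k * iteratedDeriv n g (ξ m k)) := by
      have hT' : ∀ k, g (a + b * u ^ k) = ∑ j ∈ Finset.range n,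
          ((j.factorial : ℝ)⁻¹ * (b * u ^ k) ^ j) * iteratedDeriv j g a +
          iteratedDeriv n g (ξ m k) * (b * u ^ k) ^ n / n.factorial := fun k => hT m k
      simp_rw [hT', mul_add, Finset.sum_add_distrib, Finset.mul_sum]
      rw [Finset.sum_comm]
      have z : ∀ j ∈ Finset.range n, ∑ k ∈ p.support, p.coeff k *
          ((j.factorial : ℝ)⁻¹ * (b * u ^ k) ^ j * iteratedDeriv j g a) = 0 := by
        intro j hj
        have := hpj j hj
        rw [hpe] at this
        calc _ = ((j.factorial : ℝ)⁻¹ * b ^ j * iteratedDeriv j g a) *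
            ∑ k ∈ p.support, p.coeff k * (u ^ j) ^ k := by
              rw [Finset.mul_sum]
              refine Finset.sum_congr rfl fun k _ => ?_
              rw [mul_pow, ← pow_mul, ← pow_mul, mul_comm j k]; ring
          _ = 0 := by rw [this, mul_zero]
      rw [Finset.sum_eq_zero z, zero_add]
      refine Finset.sum_congr rfl fun k _ => ?_
      rw [mul_pow, ← pow_mul, ← pow_mul, mul_comm n k]; ring
    rw [e] at h1
    exact nonneg_of_mul_nonneg_right h1 (by positivity)
  have hlim : Tendsto (fun m => ∑ k ∈ p.support, p.coeff k *
      ((u ^ n) ^ k * iteratedDeriv n g (ξ m k))) atTop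
      (𝓝 (∑ k ∈ p.support, p.coeff k * ((u ^ n) ^ k * iteratedDeriv n g a))) := by
    refine tendsto_finsetSum _ fun k _ => ?_
    refine Tendsto.const_mul _ (Tendsto.const_mul _ ?_)
    exact ((hg.continuous_iteratedDeriv n (by exact_mod_cast le_top)).tendsto a).comp (hξlim k)
  have h2 := ge_of_tendsto' hlim hnn
  have e2 : ∑ k ∈ p.support, p.coeff k * ((u ^ n) ^ k * iteratedDeriv n g a) =
      p.eval (u ^ n) * iteratedDeriv n g a := by
    rw [hpe, Finset.sum_mul]
    exact Finset.sum_congr rfl fun k _ => by ring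
  rw [e2] at h2
  exact nonneg_of_mul_nonneg_right h2 hpn

theorem aux_mollify {F : ℝ → ℝ} (hF : Monotone F) {u : ℝ}
    (H : ∀ a b, 0 ≤ a → 0 ≤ b → ∀ p : Polynomial ℝ, (∀ x, 0 ≤ p.eval x) →
      0 ≤ ∑ k ∈ p.support, p.coeff k * F (a + b * u ^ k)) {ε : ℝ} (hε : 0 < ε) :
    ∃ g : ℝ → ℝ, ContDiff ℝ ∞ g ∧ (∀ x, F x ≤ g x ∧ g x ≤ F (x + 2 * ε)) ∧
      ∀ a b, 0 ≤ a → 0 ≤ b → ∀ p : Polynomial ℝ, (∀ x, 0 ≤ p.eval x) →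
      0 ≤ ∑ k ∈ p.support, p.coeff k * g (a + b * u ^ k) := by
  let φ : ContDiffBump (0 : ℝ) := ⟨ε / 2, ε, by linarith, by linarith⟩
  set ψ : ℝ → ℝ := φ.normed volume with hψ
  have hli : LocallyIntegrable F volume := hF.locallyIntegrable
  have hint : ∀ x, Integrable (fun t => ψ t * F (x - t)) volume := by
    intro x
    have := φ.hasCompactSupport_normed (μ := volume).convolutionExists_left
      (ContinuousLinearMap.lsmul ℝ ℝ) φ.continuous_normed hli x
    simpa [ConvolutionExistsAt] using this
  have hψ0 : ∀ t, 0 ≤ ψ t := fun t => φ.nonneg_normed t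
  have hψs : ∀ t, ψ t ≠ 0 → |t| < ε := by
    intro t ht
    have : t ∈ Function.support ψ := ht
    rw [hψ, φ.support_normed_eq] at this
    simpa using this
  have hψi : Integrable ψ volume := φ.integrable_normed
  have hψ1 : ∫ t, ψ t = 1 := φ.integral_normed
  refine ⟨fun x => ∫ t, ψ t * F (x + ε - t), ?_, ?_, ?_⟩
  · have h := φ.hasCompactSupport_normed (μ := volume).contDiff_convolution_left
      (n := ⊤) (ContinuousLinearMap.lsmul ℝ ℝ) φ.contDiff_normed hli
    have h2 := h.comp (contDiff_id.add (contDiff_const (c := ε)))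
    exact h2
  · intro x
    constructor
    · calc F x = ∫ t, ψ t * F x := by rw [integral_mul_const, hψ1, one_mul]
        _ ≤ _ := by
          apply integral_mono (hψi.mul_const _) (hint _)
          intro t
          by_cases ht : ψ t = 0
          · simp [ht]
          · have := abs_lt.1 (hψs t ht)
            exact mul_le_mul_of_nonneg_left (hF (by linarith)) (hψ0 t)
    · calc _ ≤ ∫ t, ψ t * F (x + 2 * ε) := by
            apply integral_mono (hint _) (hψi.mul_const _)
            intro t
            by_cases ht : ψ t = 0
            · simp [ht]
            · have := abs_lt.1 (hψs t ht)
              exact mul_le_mul_of_nonneg_left (hF (by linarith)) (hψ0 t)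
        _ = _ := by rw [integral_mul_const, hψ1, one_mul]
  · intro a b ha hb p hp
    simp_rw [← integral_const_mul]
    rw [← integral_finsetSum _ (fun k _ => (hint _).const_mul _)]
    apply integral_nonneg
    intro t
    by_cases ht : ψ t = 0
    · simp [ht]
    · have := abs_lt.1 (hψs t ht)
      have h := mul_nonneg (hψ0 t) (H (a + ε - t) b (by linarith) hb p hp)
      rw [Finset.mul_sum] at h
      refine h.trans_eq (Finset.sum_congr rfl fun k _ => ?_)
      rw [show a + b * u ^ k + ε - t = a + ε - t + b * u ^ k by ring]; ring

theorem aux_entire {F : ℝ → ℝ} (hF : Monotone F) (hF0 : F 0 = 0) {u : ℝ} (hu0 : 0 < u) (hu1 : u < 1)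
    (H : ∀ a b, 0 ≤ a → 0 ≤ b → ∀ p : Polynomial ℝ, (∀ x, 0 ≤ p.eval x) →
      0 ≤ ∑ k ∈ p.support, p.coeff k * F (a + b * u ^ k)) :
    ∃ G : ℝ → ℝ, AbsolutelyMonotonicEntire G ∧ (∀ x > (0 : ℝ), F x = G x) := by
  have S : ∀ m : ℕ, ∃ (g : ℝ → ℝ) (c : ℕ → ℝ), (∀ n, 0 ≤ c n) ∧
      (∀ x, 0 ≤ x → HasSum (fun n => c n * x ^ n) (g x)) ∧
      (∀ x, F x ≤ g x ∧ g x ≤ F (x + 2 * (1 / ((m : ℝ) + 1)))) := by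
    intro m
    obtain ⟨g, hg, hb, hH⟩ := aux_mollify hF H (ε := 1 / ((m : ℝ) + 1)) (by positivity)
    have hd : ∀ n x, 0 ≤ x → 0 ≤ iteratedDeriv n g x := fun n x hx =>
      aux_deriv_nonneg hg hu0 hu1 hH n hx
    exact ⟨g, _, fun n => mul_nonneg (by positivity) (hd n 0 le_rfl),
      fun x hx => aux_taylor_series hg hd hx, hb⟩
  choose g c hc hs hb using S
  have hm1 : ∀ m : ℕ, 1 / ((m : ℝ) + 1) ≤ 1 := fun m => by
    rw [div_le_one (by positivity)]; have : (0 : ℝ) ≤ m := m.cast_nonneg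
    linarith
  have hbound : ∀ m n x, 0 ≤ x → c m n * x ^ n ≤ F (x + 2) := by
    intro m n x hx
    refine (le_hasSum (hs m x hx) n fun j _ => mul_nonneg (hc m j) (pow_nonneg hx j)).trans ?_
    exact (hb m x).2.trans (hF (by linarith [hm1 m]))
  let U : Ultrafilter ℕ := hyperfilter ℕ
  have hU : (U : Filter ℕ) ≤ atTop := by
    rw [← Nat.cofinite_eq_atTop]; exact hyperfilter_le_cofinite
  have L : ∀ n, ∃ d, 0 ≤ d ∧ Tendsto (fun m => c m n) U (𝓝 d) := by
    intro n
    obtain ⟨d, hd, hl⟩ := (isCompact_Icc (a := (0 : ℝ)) (b := F (1 + 2))).ultrafilter_le_nhds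
      (U.map fun m => c m n) (by
        rw [le_principal_iff]
        exact Filter.mem_map.2 (Filter.univ_mem' fun m =>
            ⟨hc m n, by simpa using hbound m n 1 zero_le_one⟩))
    exact ⟨d, hd.1, hl⟩
  choose d hd0 hd using L
  have hdb : ∀ n x, 0 ≤ x → d n * x ^ n ≤ F (x + 2) := fun n x hx =>
    le_of_tendsto' ((hd n).mul_const _) fun m => hbound m n x hx
  have hFx : ∀ x, 0 ≤ x → 0 ≤ F x := fun x hx => hF0 ▸ hF hx
  have hgeo : ∀ x : ℝ, 0 ≤ x → Summable (fun n => F (2 * x + 1 + 2) * (x / (2 * x + 1)) ^ n) := by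
    intro x hx
    apply Summable.mul_left
    apply summable_geometric_of_lt_one (by positivity)
    rw [div_lt_one (by positivity)]; linarith
  have hle : ∀ (e : ℕ → ℝ) (x : ℝ), 0 ≤ x → (∀ n, 0 ≤ e n) →
      (∀ n, e n * (2 * x + 1) ^ n ≤ F (2 * x + 1 + 2)) →
      ∀ n, ‖e n * x ^ n‖ ≤ F (2 * x + 1 + 2) * (x / (2 * x + 1)) ^ n := by
    intro e x hx he h n
    rw [Real.norm_of_nonneg (mul_nonneg (he n) (by positivity))]
    calc e n * x ^ n = e n * (2 * x + 1) ^ n * (x / (2 * x + 1)) ^ n := by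
          rw [div_pow]; field_simp
      _ ≤ _ := by gcongr; exact h n
  have hsum0 : ∀ x, 0 ≤ x → Summable (fun n => d n * x ^ n) := fun x hx =>
    Summable.of_norm_bounded (hgeo x hx) (hle d x hx hd0 fun n => hdb n _ (by linarith))
  have hsum : ∀ x, Summable (fun n => d n * x ^ n) := by
    intro x
    refine Summable.of_norm ?_
    refine (hsum0 |x| (abs_nonneg x)).congr fun n => ?_
    rw [norm_mul, norm_pow, Real.norm_eq_abs, Real.norm_eq_abs, abs_of_nonneg (hd0 n)]
  have hlim : ∀ x, 0 ≤ x → Tendsto (fun m => g m x) U (𝓝 (∑' n, d n * x ^ n)) := by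
    intro x hx
    have := tendsto_tsum_of_dominated_convergence (𝓕 := (U : Filter ℕ))
      (f := fun m n => c m n * x ^ n) (g := fun n => d n * x ^ n) (hgeo x hx)
      (fun n => (hd n).mul_const _)
      (Eventually.of_forall fun m => hle (c m) x hx (hc m) fun n => hbound m n _ (by linarith))
    refine this.congr fun m => (hs m x hx).tsum_eq
  refine ⟨fun x => ∑' n, d n * x ^ n, ⟨d, hd0, fun x => (hsum x).hasSum⟩, fun x hx => ?_⟩
  apply le_antisymm
  · exact ge_of_tendsto' (hlim x hx.le) fun m => (hb m x).1
  · have h1 : ∀ y, 0 ≤ y → y < x → ∑' n, d n * y ^ n ≤ F x := by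
      intro y hy hyx
      refine le_of_tendsto (hlim y hy) ?_
      have ht : Tendsto (fun m : ℕ => y + 2 * (1 / ((m : ℝ) + 1))) atTop (𝓝 y) := by
        simpa using ((tendsto_one_div_add_atTop_nhds_zero_nat (𝕜 := ℝ)).const_mul 2).const_add y
      filter_upwards [hU (ht.eventually_lt_const hyx)] with m hm
      exact (hb m y).2.trans (hF (le_of_lt hm))
    refine Real.tsum_le_of_sum_range_le (fun n => mul_nonneg (hd0 n) (by positivity)) fun N => ?_
    have hcont : Continuous fun y : ℝ => ∑ n ∈ Finset.range N, d n * y ^ n := by fun_prop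
    refine le_of_tendsto (hcont.continuousWithinAt (s := Iio x) (x := x)) ?_
    filter_upwards [Ioo_mem_nhdsLT hx] with y hy
    refine le_trans ?_ (h1 y hy.1.le hy.2)
    exact (hsum y).sum_le_tsum _ fun n _ => mul_nonneg (hd0 n) (pow_nonneg hy.1.le n)

theorem aux_int_pow {ν : Measure ℝ} (hν : IsAdmissible ν) (hs : ν (Iic 0)ᶜ = 0)
    {p : Polynomial ℝ} (hp : ∀ x, 0 ≤ x → 0 ≤ p.eval x) :
    0 ≤ ∑ k ∈ p.support, p.coeff k * ((-1) ^ k * moment ν k) := by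
  have e : ∑ k ∈ p.support, p.coeff k * ((-1) ^ k * moment ν k) = ∫ x, p.eval (-x) ∂ν := by
    simp_rw [Polynomial.eval_eq_sum, Polynomial.sum, moment, ← integral_const_mul]
    rw [← integral_finsetSum]
    · refine integral_congr_ae (Eventually.of_forall fun x => ?_)
      refine Finset.sum_congr rfl fun k _ => ?_
      rw [neg_pow x]
    · intro k _
      exact ((hν k).const_mul _).const_mul _
  rw [e]
  apply integral_nonneg_of_ae
  have : ∀ᵐ x ∂ν, x ∈ Iic (0 : ℝ) := hs
  filter_upwards [this] with x hx
  exact hp _ (by simpa using hx)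

theorem aux_moment_dirac2 {a b x y : ℝ} (ha : 0 ≤ a) (hb : 0 ≤ b) :
    IsAdmissible (ENNReal.ofReal a • Measure.dirac x + ENNReal.ofReal b • Measure.dirac y) ∧
    (∀ k, moment (ENNReal.ofReal a • Measure.dirac x + ENNReal.ofReal b • Measure.dirac y) k =
      a * x ^ k + b * y ^ k) ∧
    ∀ K : Set ℝ, x ∈ K → y ∈ K →
      (ENNReal.ofReal a • Measure.dirac x + ENNReal.ofReal b • Measure.dirac y) Kᶜ = 0 := by
  have h : ∀ (a x : ℝ) (k : ℕ),
      Integrable (fun t => t ^ k) (ENNReal.ofReal a • Measure.dirac x) := fun a x k =>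
    (integrable_dirac (by simp)).smul_measure ENNReal.ofReal_ne_top
  refine ⟨fun k => (h a x k).add_measure (h b y k), fun k => ?_, fun K hx hy => ?_⟩
  · rw [moment, integral_add_measure (h a x k) (h b y k)]
    simp [integral_smul_measure, ha, hb]
  · simp [hx, hy]

theorem aux_three_term {ν : Measure ℝ} (hν : IsAdmissible ν) (α β γ : ℝ) (i j l : ℕ) :
    ∫ x, (α * x ^ i + β * x ^ j + γ * x ^ l) ∂ν =
      α * moment ν i + β * moment ν j + γ * moment ν l := by
  have h1 : Integrable (fun x => α * x ^ i + β * x ^ j) ν :=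
    ((hν i).const_mul α).add ((hν j).const_mul β)
  rw [integral_add h1 ((hν l).const_mul γ),
    integral_add ((hν i).const_mul α) ((hν j).const_mul β), integral_const_mul,
    integral_const_mul, integral_const_mul]
  rfl

theorem aux_one_three {u₀ : ℝ} (hu₀ : u₀ ∈ Set.Ioo (0 : ℝ) 1) {F : ℝ → ℝ}
    (hA : ∀ s ∈ momentSet ({-1, -u₀} : Set ℝ), (fun k => F (s k)) ∈ momentSet (Set.Iic (0 : ℝ)))
    (hB : ∀ s ∈ truncMomentSet 4 ({-1, 0} : Set ℝ),
          (fun k => F (s k)) ∈ truncMomentSet 4 (Set.Iic (0 : ℝ))) :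
    ∃ G : ℝ → ℝ, AbsolutelyMonotonicEntire G ∧ (∀ x > (0 : ℝ), F x = G x) ∧
          F 0 = 0 ∧ ∀ x < (0 : ℝ), F x = -G (-x) := by
  have key : ∀ a b, 0 ≤ a → 0 ≤ b → 0 ≤ F (a + b) ∧ F (-a) = - F a ∧ F a ≤ F (a + b) := by
    intro a b ha hb
    obtain ⟨h1, h2, h3⟩ := aux_moment_dirac2 (x := -1) (y := 0) ha hb
    obtain ⟨ν, n1, n2, n3⟩ := hB (fun k => a * (-1) ^ (k : ℕ) + b * 0 ^ (k : ℕ))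
      ⟨_, h1, h3 _ (by simp) (by simp), fun k => (h2 k).symm⟩
    have m0 : F (a + b) = moment ν 0 := by simpa using n3 0
    have m1 : F (-a) = moment ν 1 := by simpa using n3 1
    have m2 : F a = moment ν 2 := by simpa using n3 2
    have m3 : F (-a) = moment ν 3 := by
      have := n3 3
      norm_num [show ((3 : Fin 5) : ℕ) = 3 from rfl] at this
      exact this
    have m4 : F a = moment ν 4 := by
      have := n3 4
      norm_num [show ((4 : Fin 5) : ℕ) = 4 from rfl] at this
      exact this
    have hx : ∀ᵐ x ∂ν, x ∈ Iic (0 : ℝ) := n2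
    have i := n1
    have e1 : 0 ≤ -moment ν 1 - 2 * moment ν 2 - moment ν 3 := by
      have := aux_three_term i (-1) (-2) (-1) 1 2 3
      refine le_trans ?_ (this.le.trans (by linarith))
      apply integral_nonneg_of_ae
      filter_upwards [hx] with x hx
      have hx : x ≤ 0 := hx
      simp only [Pi.zero_apply]
      nlinarith [mul_nonneg (neg_nonneg.2 hx) (sq_nonneg (1 + x))]
    have e2 : 0 ≤ moment ν 2 + 2 * moment ν 3 + moment ν 4 := by
      have := aux_three_term i (1) (2) (1) 2 3 4
      refine le_trans ?_ (this.le.trans (by linarith))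
      apply integral_nonneg
      intro x
      simp only [Pi.zero_apply]
      nlinarith [sq_nonneg (x * (1 + x))]
    have e3 : 0 ≤ moment ν 0 + 2 * moment ν 1 + moment ν 2 := by
      have := aux_three_term i (1) (2) (1) 0 1 2
      refine le_trans ?_ (this.le.trans (by linarith))
      apply integral_nonneg
      intro x
      simp only [Pi.zero_apply]
      nlinarith [sq_nonneg (1 + x)]
    have e4 : 0 ≤ moment ν 0 := by
      apply integral_nonneg
      intro x; simp
    refine ⟨by linarith, by linarith, by linarith⟩
  have hodd : ∀ a, F (-a) = - F a := by
    intro a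
    rcases le_total 0 a with h | h
    · exact (key a 0 h le_rfl).2.1
    · have := (key (-a) 0 (by linarith) le_rfl).2.1
      rw [neg_neg] at this
      linarith
  have hF0 : F 0 = 0 := by have := hodd 0; rw [neg_zero] at this; linarith
  have hpos : ∀ a b, 0 ≤ a → a ≤ b → F a ≤ F b := fun a b ha hab => by
    have := (key a (b - a) ha (by linarith)).2.2
    rwa [add_sub_cancel] at this
  have hmono : Monotone F := by
    intro a b hab
    rcases le_total 0 a with h | h
    · exact hpos a b h hab
    · rcases le_total 0 b with h' | h'
      · have h1 := hpos 0 b le_rfl h'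
        have h2 := hpos 0 (-a) le_rfl (by linarith)
        rw [hodd] at h2
        linarith
      · have := hpos (-b) (-a) (by linarith) (by linarith)
        rw [hodd, hodd] at this
        linarith
  obtain ⟨G, hG, hG'⟩ := aux_entire hmono hF0 hu₀.1 hu₀.2 (by
    intro a b ha hb p hp
    obtain ⟨h1, h2, h3⟩ := aux_moment_dirac2 (x := -1) (y := -u₀) ha hb
    obtain ⟨ν, n1, n2, n3⟩ := hA (fun k => a * (-1) ^ (k : ℕ) + b * (-u₀) ^ (k : ℕ))
      ⟨_, h1, h3 _ (by simp) (by simp), fun k => (h2 k).symm⟩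
    have h := aux_int_pow n1 n2 (p := p) (fun x _ => hp x)
    refine h.trans_eq (Finset.sum_congr rfl fun k _ => ?_)
    rw [← n3 k]
    simp only [neg_pow u₀]
    congr 1
    rcases Nat.even_or_odd k with hk | hk
    · simp [hk.neg_one_pow]
    · simp only [hk.neg_one_pow]
      rw [show a * -1 + b * (-1 * u₀ ^ k) = -(a + b * u₀ ^ k) by ring, hodd]
      ring)
  refine ⟨G, hG, hG', hF0, fun x hx => ?_⟩
  rw [← hG' (-x) (by linarith), hodd, neg_neg]

theorem aux_finite_Icc {μ : Measure ℝ} [IsFiniteMeasure μ] (h : μ (Icc (-1) 0)ᶜ = 0) :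
    IsAdmissible μ := by
  intro k
  refine Integrable.of_bound (by fun_prop) 1 ?_
  have : ∀ᵐ x ∂μ, x ∈ Icc (-1 : ℝ) 0 := h
  filter_upwards [this] with x hx
  rw [norm_pow]
  apply pow_le_one₀ (norm_nonneg _)
  rw [Real.norm_eq_abs, abs_le]
  exact ⟨hx.1, hx.2.trans zero_le_one⟩

theorem aux_pow_measure {μ : Measure ℝ} [IsFiniteMeasure μ] (h : μ (Icc (-1) 0)ᶜ = 0) (n : ℕ) :
    ∃ ν : Measure ℝ, IsFiniteMeasure ν ∧ ν (Icc (-1) 0)ᶜ = 0 ∧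
      ∀ k, moment ν k = (-1) ^ k * ((-1) ^ k * moment μ k) ^ n := by
  induction n with
  | zero => exact ⟨Measure.dirac (-1), inferInstance, by simp, fun k => by simp [moment]⟩
  | succ n ih =>
    obtain ⟨ν, h1, h2, h3⟩ := ih
    have hm : Measurable (fun q : ℝ × ℝ => -(q.1 * q.2)) := by fun_prop
    refine ⟨(μ.prod ν).map (fun q => -(q.1 * q.2)), inferInstance, ?_, fun k => ?_⟩
    · have a1 : ∀ᵐ q ∂(μ.prod ν), q.1 ∈ Icc (-1 : ℝ) 0 :=
        Measure.quasiMeasurePreserving_fst.ae (show ∀ᵐ x ∂μ, x ∈ Icc (-1 : ℝ) 0 from h)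
      have a2 : ∀ᵐ q ∂(μ.prod ν), q.2 ∈ Icc (-1 : ℝ) 0 :=
        Measure.quasiMeasurePreserving_snd.ae (show ∀ᵐ x ∂ν, x ∈ Icc (-1 : ℝ) 0 from h2)
      rw [Measure.map_apply hm measurableSet_Icc.compl]
      change ∀ᵐ q ∂(μ.prod ν), -(q.1 * q.2) ∈ Icc (-1 : ℝ) 0
      filter_upwards [a1, a2] with q hq1 hq2
      constructor
      · nlinarith [hq1.1, hq1.2, hq2.1, hq2.2]
      · nlinarith [hq1.1, hq1.2, hq2.1, hq2.2]
    · rw [moment, integral_map hm.aemeasurable (by fun_prop)]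
      have : ∀ q : ℝ × ℝ, (-(q.1 * q.2)) ^ k = (-1) ^ k * (q.1 ^ k * q.2 ^ k) := fun q => by
        rw [neg_pow, mul_pow]
      simp_rw [this]
      rw [integral_const_mul, integral_prod_mul (fun x : ℝ => x ^ k) (fun x : ℝ => x ^ k)]
      have h3' := h3 k
      simp only [moment] at h3' ⊢
      rw [h3', pow_succ]
      ring

theorem aux_three_two {F G : ℝ → ℝ} (hG : AbsolutelyMonotonicEntire G)
    (hp : ∀ x > (0 : ℝ), F x = G x) (h0 : F 0 = 0) (hn : ∀ x < (0 : ℝ), F x = -G (-x))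
    {s : ℕ → ℝ} (hs : s ∈ momentSet (Set.Icc (-1 : ℝ) 0)) :
    (fun k => F (s k)) ∈ momentSet (Set.Icc (-1 : ℝ) 0) := by
  obtain ⟨μ, hμ, hK, hsk⟩ := hs
  obtain ⟨c, hc, hsum⟩ := hG
  have hfin : IsFiniteMeasure μ := by
    have := hμ 0
    simp only [pow_zero] at this
    exact (integrable_const_iff_isFiniteMeasure one_ne_zero).1 this
  have hx : ∀ᵐ x ∂μ, x ∈ Icc (-1 : ℝ) 0 := hK
  have ht : ∀ k, (-1) ^ k * s k = ∫ x, (-x) ^ k ∂μ := by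
    intro k
    rw [hsk, moment, ← integral_const_mul]
    congr 1; ext x; rw [neg_pow x]
  have hnn : ∀ k, 0 ≤ᵐ[μ] fun x => (-x) ^ k := fun k => by
    filter_upwards [hx] with x hx
    exact pow_nonneg (by linarith [hx.2]) k
  have ht0 : ∀ k, 0 ≤ (-1) ^ k * s k := fun k => by
    rw [ht]; exact integral_nonneg_of_ae (hnn k)
  have hi : ∀ k, Integrable (fun x : ℝ => (-x) ^ k) μ := fun k => by
    have := (hμ k).const_mul ((-1) ^ k)
    refine this.congr (Eventually.of_forall fun x => ?_)
    simp only [neg_pow x]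
  by_cases hz : ∃ k, (-1) ^ k * s k = 0
  · obtain ⟨k, hk⟩ := hz
    rw [ht, integral_eq_zero_iff_of_nonneg_ae (hnn k) (hi k)] at hk
    have hs0 : ∀ j, j ≠ 0 → s j = 0 := by
      intro j hj
      rw [hsk, moment]
      apply integral_eq_zero_of_ae
      filter_upwards [hk] with x hx
      have : x = 0 := by simpa using eq_zero_of_pow_eq_zero hx
      simp [this, hj]
    have hF : 0 ≤ F (s 0) := by
      have h1 : 0 ≤ s 0 := by simpa using ht0 0
      rcases h1.eq_or_lt with h | h
      · rw [← h, h0]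
      · rw [hp _ h]
        exact (hsum (s 0)).nonneg fun n => mul_nonneg (hc n) (pow_nonneg h1 n)
    obtain ⟨q1, q2, q3⟩ := aux_moment_dirac2 (x := 0) (y := 0) hF le_rfl
    refine ⟨_, q1, q3 _ (by simp) (by simp), fun k => ?_⟩
    rw [q2]
    by_cases hk : k = 0
    · simp [hk]
    · simp [hk, hs0 k hk, h0]
  · push Not at hz
    have htp : ∀ k, 0 < (-1) ^ k * s k := fun k => lt_of_le_of_ne (ht0 k) (hz k).symm
    have hFk : ∀ k, F (s k) = (-1) ^ k * G ((-1) ^ k * s k) := by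
      intro k
      have h := htp k
      rcases Nat.even_or_odd k with hk | hk
      · simp only [hk.neg_one_pow, one_mul] at h ⊢
        exact hp _ h
      · simp only [hk.neg_one_pow, neg_one_mul] at h ⊢
        exact hn _ (by linarith)
    choose ν hν1 hν2 hν3 using aux_pow_measure (μ := μ) hK
    let ρ : Measure ℝ := Measure.sum fun n => ENNReal.ofReal (c n) • ν n
    have hρK : ρ (Icc (-1) 0)ᶜ = 0 := by
      rw [Measure.sum_apply _ measurableSet_Icc.compl]
      simp [hν2]
    have hmass : ∀ n, ν n univ = ENNReal.ofReal (s 0 ^ n) := by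
      intro n
      have := hν3 n 0
      simp only [moment, pow_zero, integral_const, smul_eq_mul, mul_one, one_mul] at this
      have h2 : s 0 = μ.real univ := by simpa [moment] using hsk 0
      rw [← ofReal_measureReal, this, ← h2]
    have hs0 : 0 ≤ s 0 := by simpa using ht0 0
    have hρ : IsFiniteMeasure ρ := by
      constructor
      rw [Measure.sum_apply _ MeasurableSet.univ]
      have : ∀ n, (ENNReal.ofReal (c n) • ν n) univ = ENNReal.ofReal (c n * s 0 ^ n) := fun n => by
        rw [Measure.smul_apply, hmass, smul_eq_mul, ENNReal.ofReal_mul (hc n)]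
      simp_rw [this]
      rw [← ENNReal.ofReal_tsum_of_nonneg (fun n => mul_nonneg (hc n) (pow_nonneg hs0 n))
        (hsum _).summable]
      exact ENNReal.ofReal_lt_top
    have hρa := aux_finite_Icc hρK
    refine ⟨ρ, hρa, hρK, fun k => ?_⟩
    have h1 := hasSum_integral_measure (hρa k)
    have h2 : HasSum (fun n => ∫ x, x ^ k ∂(ENNReal.ofReal (c n) • ν n))
        ((-1) ^ k * G ((-1) ^ k * s k)) := by
      have e : (fun n => ∫ x, x ^ k ∂(ENNReal.ofReal (c n) • ν n)) =
          fun n => (-1) ^ k * (c n * ((-1) ^ k * s k) ^ n) := by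
        funext n
        rw [integral_smul_measure, ENNReal.toReal_ofReal (hc n), smul_eq_mul]
        have := hν3 n k
        rw [moment] at this
        rw [this, ← hsk]; ring
      rw [e]
      exact (hsum ((-1) ^ k * s k)).mul_left ((-1) ^ k)
    simp only [hFk]
    exact h2.unique h1

/-- Classification of the entrywise moment transformers on `[-1,0]` (odd case). -/
theorem moment_transform_Icc_neg_one_zero_TFAE (u₀ : ℝ) (hu₀ : u₀ ∈ Set.Ioo (0 : ℝ) 1)
    (F : ℝ → ℝ) :
    List.TFAE
      [(∀ s ∈ momentSet ({-1, -u₀} : Set ℝ),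
          (fun k => F (s k)) ∈ momentSet (Set.Iic (0 : ℝ))) ∧
        (∀ s ∈ truncMomentSet 4 ({-1, 0} : Set ℝ),
          (fun k => F (s k)) ∈ truncMomentSet 4 (Set.Iic (0 : ℝ))) ∧
        (∀ u ∈ Set.Ioo (0 : ℝ) 1, ∀ s ∈ truncMomentSet 4 ({-u} : Set ℝ),
          (fun k => F (s k)) ∈ truncMomentSet 4 (Set.Iic (0 : ℝ))),
        ∀ s ∈ momentSet (Set.Icc (-1 : ℝ) 0),
          (fun k => F (s k)) ∈ momentSet (Set.Icc (-1 : ℝ) 0),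
        ∃ G : ℝ → ℝ, AbsolutelyMonotonicEntire G ∧ (∀ x > (0 : ℝ), F x = G x) ∧
          F 0 = 0 ∧ ∀ x < (0 : ℝ), F x = -G (-x)] := by
  tfae_have 3 → 2 := by
    rintro ⟨G, hG, hp, h0, hn⟩ s hs
    exact aux_three_two hG hp h0 hn hs
  tfae_have 1 → 3 := fun ⟨hA, hB, _⟩ => aux_one_three hu₀ hA hB
  tfae_have 2 → 1 := by
    intro h
    have hsub : ∀ K ⊆ Icc (-1 : ℝ) 0, ∀ μ : Measure ℝ, IsAdmissible μ → μ Kᶜ = 0 →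
        ∃ ν : Measure ℝ, IsAdmissible ν ∧ ν (Iic 0)ᶜ = 0 ∧
          ∀ k, F (moment μ k) = moment ν k := by
      intro K hK μ hμ h0
      obtain ⟨ν, n1, n2, n3⟩ := h (moment μ)
        ⟨μ, hμ, measure_mono_null (compl_subset_compl.2 hK) h0, fun _ => rfl⟩
      exact ⟨ν, n1, measure_mono_null (compl_subset_compl.2 Icc_subset_Iic_self) n2, n3⟩
    refine ⟨?_, ?_, ?_⟩
    · rintro s ⟨μ, h1, h2, h3⟩
      obtain ⟨ν, n1, n2, n3⟩ := hsub _ (by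
        rintro x (rfl | rfl)
        · simp
        · exact ⟨by linarith [hu₀.2], by linarith [hu₀.1]⟩) μ h1 h2
      exact ⟨ν, n1, n2, fun k => by simp only [h3, n3]⟩
    · rintro s ⟨μ, h1, h2, h3⟩
      obtain ⟨ν, n1, n2, n3⟩ := hsub _ (by
        rintro x (rfl | rfl) <;> simp) μ h1 h2
      exact ⟨ν, n1, n2, fun k => by simp only [h3, n3]⟩
    · rintro u hu s ⟨μ, h1, h2, h3⟩
      obtain ⟨ν, n1, n2, n3⟩ := hsub _ (by
        rintro x rfl
        exact ⟨by linarith [hu.2], by linarith [hu.1]⟩) μ h1 h2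
      exact ⟨ν, n1, n2, fun k => by simp only [h3, n3]⟩
  tfae_finish
end
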